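/- Suppose k ∈ ℕ∖{1}, 0 < 1/n ≪ ν ≪ ε, and 0 ≤ λ ≤ 1/4. Suppose R = (ε/3, a, d_{a,k}) is a regularity instance. Let V be a vertex set of size n and let G^(k), H^(k) be k-graphs on V with |G^(k) △ H^(k)| ≤ ν·C(n,k). Suppose P = P(k−1, a) is a (1/a_1, ε, a, λ)-equitable family of partitions on V which is an (ε, d_{a,k})-partition of H^(k), and suppose Q = Q(k−1, a) is a family of partitions on V such that for every j ∈ [k−1], x̂ ∈ Â(j, j−1, a) and b ∈ [a_j], |P^(j)(x̂,b) △ Q^(j)(x̂,b)| ≤ ν·C(n,j). Then Q is a (1/a_1, ε+ν^{1/6}, a, λ+ν^{1/6})-equitable family of partitions which is an (ε+ν^{1/6}, d_{a,k})-partition of G^(k). -/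

import Mathlib

namespace HypReg

open Finset

attribute [local instance 10] Classical.propDecidable

noncomputable section

variable {V : Type*} [DecidableEq V]

/-- Representation of a 1-graph: the set of singletons of `U`. -/
def sing (U : Finset V) : Finset (Finset V) :=
  U.image fun v => ({v} : Finset V)

/-- `Kset W j i B`: the i-element subsets of `W` all of whose j-element subsets lie in `B`. -/
def Kset (W : Finset V) (j i : ℕ) (B : Finset (Finset V)) : Finset (Finset V) :=
  (W.powersetCard i).filter fun S => ∀ T ∈ S.powersetCard j, T ∈ B

/-- Clique operator which, at level 1, uses the ambient family `cr` of crossing i-sets. -/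
def KsetC (W : Finset V) (cr : Finset (Finset V)) (j i : ℕ) (B : Finset (Finset V)) :
    Finset (Finset V) :=
  if j = 1 then cr.filter fun S => ∀ v ∈ S, ({v} : Finset V) ∈ B
  else Kset W j i B

/-- `A` (a (j+1)-graph) is (ε,d)-regular with respect to the j-graph `B` (plain clique sets). -/
def RegPair (W : Finset V) (j : ℕ) (ε d : ℝ) (A B : Finset (Finset V)) : Prop :=
  ∀ Q ⊆ B, ε * ((Kset W j (j+1) B).card : ℝ) ≤ ((Kset W j (j+1) Q).card : ℝ) →
    |((A ∩ Kset W j (j+1) Q).card : ℝ) - d * ((Kset W j (j+1) Q).card : ℝ)|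
      ≤ ε * ((Kset W j (j+1) Q).card : ℝ)

/-- (ε,d)-regularity with crossing-aware clique sets. -/
def RegPairC (W : Finset V) (cr : Finset (Finset V)) (j : ℕ) (ε d : ℝ)
    (A B : Finset (Finset V)) : Prop :=
  ∀ Q ⊆ B, ε * ((KsetC W cr j (j+1) B).card : ℝ) ≤ ((KsetC W cr j (j+1) Q).card : ℝ) →
    |((A ∩ KsetC W cr j (j+1) Q).card : ℝ) - d * ((KsetC W cr j (j+1) Q).card : ℝ)|
      ≤ ε * ((KsetC W cr j (j+1) Q).card : ℝ)

/-- Relative density `d(A | B)` of the (j+1)-graph `A` w.r.t. the j-graph `B`. -/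
def dens (W : Finset V) (cr : Finset (Finset V)) (j : ℕ) (A B : Finset (Finset V)) : ℝ :=
  if (KsetC W cr j (j+1) B).card = 0 then 0
  else ((A ∩ KsetC W cr j (j+1) B).card : ℝ) / ((KsetC W cr j (j+1) B).card : ℝ)

/-- `H` is a k-graph on the vertex set `W`. -/
def IsKGraph (W : Finset V) (k : ℕ) (H : Finset (Finset V)) : Prop :=
  ∀ e ∈ H, e ⊆ W ∧ e.card = k

/-- symmetric difference of two hypergraphs -/
def sd (A B : Finset (Finset V)) : Finset (Finset V) := (A \ B) ∪ (B \ A)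

/-- A (candidate) family of partitions: the ground set, the class of each vertex and,
for each level `j ≥ 2`, the class of each crossing j-set. -/
structure PartFam (V : Type*) [DecidableEq V] where
  gnd : Finset V
  vClass : V → Finset V
  cls : ℕ → Finset V → Finset (Finset V)

namespace PartFam

variable (F : PartFam V)

/-- crossing i-sets -/
def cross (i : ℕ) : Finset (Finset V) :=
  (F.gnd.powersetCard i).filter fun S =>
    ∀ u ∈ S, ∀ v ∈ S, u ≠ v → F.vClass u ≠ F.vClass v

/-- the level-j polyad of a vertex set `J` -/
def polyad (j : ℕ) (J : Finset V) : Finset (Finset V) :=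
  if j = 1 then sing (J.sup F.vClass) else (J.powersetCard j).sup (F.cls j)

/-- the clique set `K_j(P̂^{(j-1)}(J))` of the (j−1)-polyad of a crossing j-set `J` -/
def polyCliques (j : ℕ) (J : Finset V) : Finset (Finset V) :=
  KsetC F.gnd (F.cross j) (j-1) j (F.polyad (j-1) J)

/-- `F` is a family of partitions `P(k−1, a)`. -/
def IsFamily (k : ℕ) (a : ℕ → ℕ) : Prop :=
  (∀ v ∈ F.gnd, v ∈ F.vClass v) ∧
  (∀ v ∈ F.gnd, F.vClass v ⊆ F.gnd) ∧
  (∀ u ∈ F.gnd, ∀ v ∈ F.gnd, u ∈ F.vClass v → F.vClass u = F.vClass v) ∧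
  (F.gnd.image F.vClass).card = a 1 ∧ k ≤ a 1 ∧
  ∀ j, 2 ≤ j → j ≤ k - 1 →
    (∀ J ∈ F.cross j, J ∈ F.cls j J) ∧
    (∀ J ∈ F.cross j, ∀ I ∈ F.cls j J, F.cls j I = F.cls j J) ∧
    (∀ J ∈ F.cross j, F.cls j J ⊆ F.polyCliques j J) ∧
    (∀ J ∈ F.cross j, F.polyCliques j J ⊆ F.cross j) ∧
    (∀ J ∈ F.cross j, ((F.polyCliques j J).image (F.cls j)).card = a j)

/-- the regularity condition in the definition of an equitable family of partitions:
all polyad complexes of crossing k-sets are (ε, (1/a_2, …, 1/a_{k−1}))-regular. -/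
def PolyadReg (k : ℕ) (a : ℕ → ℕ) (ε : ℝ) : Prop :=
  ∀ K ∈ F.cross k, ∀ j, 2 ≤ j → j ≤ k - 1 → ∀ J ∈ K.powersetCard j,
    RegPairC F.gnd (F.cross j) (j-1) ε (1 / (a j : ℝ)) (F.polyad j K) (F.polyad (j-1) J)

/-- `(η, ε, a, λ)`-equitable family of partitions -/
def IsEquitable (k : ℕ) (a : ℕ → ℕ) (η ε lam : ℝ) : Prop :=
  1 ≤ η * (a 1 : ℝ) ∧
  (∀ v ∈ F.gnd, |((F.vClass v).card : ℝ) - (F.gnd.card : ℝ) / (a 1 : ℝ)|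
      ≤ lam * (F.gnd.card : ℝ) / (a 1 : ℝ)) ∧
  F.PolyadReg k a ε

/-- `(η, ε, a)`-equitable family of partitions (classes of size ⌊n/a₁⌋ or ⌊n/a₁⌋+1) -/
def IsEquitableE (k : ℕ) (a : ℕ → ℕ) (η ε : ℝ) : Prop :=
  1 ≤ η * (a 1 : ℝ) ∧
  (∀ v ∈ F.gnd, (F.vClass v).card = F.gnd.card / a 1 ∨
      (F.vClass v).card = F.gnd.card / a 1 + 1) ∧
  F.PolyadReg k a ε

/-- `G` is perfectly ε-regular with respect to `F`. -/
def PerfectlyRegular (k : ℕ) (ε : ℝ) (G : Finset (Finset V)) : Prop :=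
  ∀ K ∈ F.cross k, ∃ d : ℝ, 0 ≤ d ∧
    RegPairC F.gnd (F.cross k) (k-1) ε d G (F.polyad (k-1) K)

end PartFam

/-- `a` is a T-bounded vector of length k−1. -/
def BoundedVec (k T : ℕ) (a : ℕ → ℕ) : Prop := ∀ j, 1 ≤ j → j ≤ k - 1 → a j ≤ T

/-- level-j refinement `F^{(j)} ≺ P^{(j)}` between two families of partitions -/
def RefinesAt (F P : PartFam V) (j : ℕ) : Prop :=
  if j = 1 then ∀ v ∈ F.gnd, F.vClass v ⊆ P.vClass v
  else ∀ I ∈ F.cross j,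
    (∃ J ∈ P.cross j, F.cls j I ⊆ P.cls j J) ∨ ∀ S ∈ F.cls j I, S ∉ P.cross j

/-- level-j approximate refinement `F^{(j)} ≺_ν P^{(j)}` -/
def RefinesApproxAt (F P : PartFam V) (j : ℕ) (ν : ℝ) : Prop :=
  if j = 1 then
    ∃ f : Finset V → Finset V,
      (∀ v ∈ F.gnd, f (F.vClass v) ∈ F.gnd.image P.vClass) ∧
      ∑ C ∈ F.gnd.image F.vClass, ((C \ f C).card : ℝ) ≤ ν * (F.gnd.card : ℝ)
  else
    ∃ f : Finset (Finset V) → Finset (Finset V),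
      (∀ I ∈ F.cross j,
        f (F.cls j I) ∈ ((P.cross j).image (P.cls j)) ∪ {F.cross j \ P.cross j}) ∧
      ∑ C ∈ (F.cross j).image (F.cls j), ((C \ f C).card : ℝ) ≤ ν * ((F.cross j).card : ℝ)

/-- The address space: a base set (of class indices) together with a labelling of its subsets. -/
abbrev Addr := Finset ℕ × (Finset ℕ → ℕ)

/-- `x` is an element of the address space `Â(l, j, a)`. -/
def IsAddress (l j : ℕ) (a : ℕ → ℕ) (x : Addr) : Prop :=
  x.1.card = l ∧ (∀ i ∈ x.1, 1 ≤ i ∧ i ≤ a 1) ∧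
  (∀ L : Finset ℕ, L ⊆ x.1 → 2 ≤ L.card → L.card ≤ j → 1 ≤ x.2 L ∧ x.2 L ≤ a L.card) ∧
  (∀ L : Finset ℕ, ¬(L ⊆ x.1 ∧ 2 ≤ L.card ∧ L.card ≤ j) → x.2 L = 0)

/-- restriction `ŷ ≤ x̂` of an address to the base `B`, keeping levels up to `j`. -/
def restrictA (x : Addr) (j : ℕ) (B : Finset ℕ) : Addr :=
  (B, fun L => if L ⊆ B ∧ 2 ≤ L.card ∧ L.card ≤ j then x.2 L else 0)

/-- `d` is a density function of `Â(k, k−1, a)`. -/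
def DensityFun (k : ℕ) (a : ℕ → ℕ) (d : Addr → ℝ) : Prop :=
  ∀ x : Addr, IsAddress k (k-1) a x → 0 ≤ d x ∧ d x ≤ 1

/-- A family of partitions together with an `a`-labelling. -/
structure LabFam (V : Type*) [DecidableEq V] extends PartFam V where
  vIdx : V → ℕ
  lbl : ℕ → Finset V → ℕ

namespace LabFam

variable (F : LabFam V)

/-- `F` is a family of partitions with a legitimate `a`-labelling. -/
def IsLabeled (k : ℕ) (a : ℕ → ℕ) : Prop :=
  F.toPartFam.IsFamily k a ∧
  (∀ v ∈ F.gnd, 1 ≤ F.vIdx v ∧ F.vIdx v ≤ a 1) ∧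
  (∀ u ∈ F.gnd, ∀ v ∈ F.gnd, (F.vIdx u = F.vIdx v ↔ F.vClass u = F.vClass v)) ∧
  ∀ j, 2 ≤ j → j ≤ k - 1 →
    (∀ I ∈ F.toPartFam.cross j, 1 ≤ F.lbl j I ∧ F.lbl j I ≤ a j) ∧
    (∀ I ∈ F.toPartFam.cross j, ∀ I' ∈ F.cls j I, F.lbl j I' = F.lbl j I) ∧
    (∀ I ∈ F.toPartFam.cross j, ∀ I' ∈ F.toPartFam.cross j,
      F.toPartFam.polyad (j-1) I = F.toPartFam.polyad (j-1) I' →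
      F.lbl j I = F.lbl j I' → F.cls j I = F.cls j I')

/-- the address `x̂(L)` (up to level j) of a crossing set `L` -/
def addrOf (j : ℕ) (L : Finset V) : Addr :=
  (L.image F.vIdx,
   fun M => if M ⊆ L.image F.vIdx ∧ 2 ≤ M.card ∧ M.card ≤ j
     then F.lbl M.card (L.filter fun v => F.vIdx v ∈ M) else 0)

/-- the part `P^{(j)}(x̂, b)` -/
def partAt (j : ℕ) (x : Addr) (b : ℕ) : Finset (Finset V) :=
  if j ≤ 1 then (if x.1 = {b} then sing (F.gnd.filter fun v => F.vIdx v = b) else ∅)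
  else (F.toPartFam.cross j).filter fun I => F.addrOf (j-1) I = x ∧ F.lbl j I = b

/-- the polyad `P̂^{(j)}(x̂)` -/
def polyAt (j : ℕ) (x : Addr) : Finset (Finset V) :=
  if j = 1 then sing (F.gnd.filter fun v => F.vIdx v ∈ x.1)
  else (x.1.powersetCard j).sup fun B => F.partAt j (restrictA x (j-1) B) (x.2 B)

/-- `F` is an `(ε, d)`-partition of `H`. -/
def IsDensPartition (k : ℕ) (a : ℕ → ℕ) (ε : ℝ) (d : Addr → ℝ)
    (H : Finset (Finset V)) : Prop :=
  ∀ x : Addr, IsAddress k (k-1) a x →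
    RegPairC F.gnd (F.toPartFam.cross k) (k-1) ε (d x) H (F.polyAt (k-1) x)

/-- `F` is an `(ε, a, d)`-equitable partition of `H`. -/
def IsEquitPartition (k : ℕ) (a : ℕ → ℕ) (ε : ℝ) (d : Addr → ℝ)
    (H : Finset (Finset V)) : Prop :=
  F.IsLabeled k a ∧ F.toPartFam.IsEquitableE k a (1 / (a 1 : ℝ)) ε ∧
  F.IsDensPartition k a ε d H

end LabFam

/-- An ℓ-partite complex: vertex classes and, for each level, a partite graph. -/
structure Cx (V : Type*) [DecidableEq V] (l : ℕ) where
  C : Fin l → Finset V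
  G : ℕ → Finset (Finset V)

namespace Cx

variable {l : ℕ} (X : Cx V l)

def gnd : Finset V := Finset.univ.sup X.C

/-- crossing i-sets with respect to the classes of `X` -/
def cross (i : ℕ) : Finset (Finset V) :=
  (X.gnd.powersetCard i).filter fun S => ∀ t : Fin l, (S ∩ X.C t).card ≤ 1

/-- restriction of the level-j graph to the classes indexed by `L` -/
def restr (j : ℕ) (L : Finset (Fin l)) : Finset (Finset V) :=
  if j = 1 then sing (L.sup X.C) else (X.G j).filter fun e => e ⊆ L.sup X.C

/-- `X` is a complex with levels up to `k`. -/
def IsComplex (k : ℕ) : Prop :=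
  (∀ s t : Fin l, s ≠ t → Disjoint (X.C s) (X.C t)) ∧
  (∀ j, 2 ≤ j → j ≤ k → X.G j ⊆ X.cross j) ∧
  (∀ j, 3 ≤ j → j ≤ k → X.G j ⊆ Kset X.gnd (j-1) j (X.G (j-1)))

/-- `X` is an (ε, (d_2, …, d_k))-regular complex. -/
def IsRegular (k : ℕ) (ε : ℝ) (d : ℕ → ℝ) : Prop :=
  ∀ j, 2 ≤ j → j ≤ k → ∀ L ∈ (Finset.univ : Finset (Fin l)).powersetCard j,
    RegPairC X.gnd (X.cross j) (j-1) ε (d j) (X.G j) (X.restr (j-1) L)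

/-- The restricted complex `X[L]` is (ε, (d_2, …, d_{k−1}, p))-regular. -/
def RestrRegular (k : ℕ) (ε : ℝ) (d : ℕ → ℝ) (L : Finset (Fin l)) (p : ℝ) : Prop :=
  ∀ j, 2 ≤ j → j ≤ k → ∀ L' ∈ L.powersetCard j,
    RegPairC X.gnd (X.cross j) (j-1) ε (if j = k then p else d j)
      (X.restr j L) (X.restr (j-1) L')

/-- clique set `K_i` of the level-j graph of the complex (level 1: crossing sets). -/
def KsetLvl (j i : ℕ) : Finset (Finset V) :=
  if j ≤ 1 then X.cross i else Kset X.gnd j i (X.G j)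

end Cx

/-- `eCL`, `mCL` satisfy the counting lemma of Kohayakawa–Rödl–Skokan. -/
def CountingProp (eCL : ℝ → ℝ → ℕ → ℕ → ℝ) (mCL : ℝ → ℝ → ℕ → ℕ → ℕ) : Prop :=
  ∀ γ d₀ : ℝ, 0 < γ → 0 < d₀ → ∀ k l : ℕ, 2 ≤ k → k ≤ l →
    (0 < eCL γ d₀ k l ∧ eCL γ d₀ k l ≤ 1) ∧
    ∀ (V₀ : Type) [DecidableEq V₀], ∀ (X : Cx V₀ l) (m : ℕ) (lam ε : ℝ) (d : ℕ → ℝ),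
      0 ≤ lam → lam < 1/4 → 0 < ε → ε ≤ eCL γ d₀ k l → mCL γ d₀ k l ≤ m →
      (∀ j, 2 ≤ j → j ≤ k → d₀ ≤ d j) →
      X.IsComplex k →
      (∀ i, |((X.C i).card : ℝ) - (m : ℝ)| ≤ lam * m) →
      X.IsRegular k ε d →
      |((Kset X.gnd k l (X.G k)).card : ℝ) -
        (∏ j ∈ Finset.Icc 2 k, d j ^ (l.choose j)) * ∏ i, ((X.C i).card : ℝ)|
        ≤ γ * ((∏ j ∈ Finset.Icc 2 k, d j ^ (l.choose j)) * ∏ i, ((X.C i).card : ℝ))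

/-- `eRI` is a legitimate function for defining regularity instances. -/
def GoodERI (eRI : ℕ → ℕ → ℝ) : Prop :=
  (∀ t k : ℕ, 1 ≤ t → 2 ≤ k → 0 < eRI t k ∧ eRI t k ≤ 1) ∧
  (∀ k t t' : ℕ, 1 ≤ t → t ≤ t' → eRI t' k ≤ eRI t k) ∧
  (∀ t k k' : ℕ, 2 ≤ k → k ≤ k' → eRI t k' ≤ eRI t k) ∧
  (∀ k : ℕ, Filter.Tendsto (fun t => eRI t k) Filter.atTop (nhds 0)) ∧
  ∃ (eCL : ℝ → ℝ → ℕ → ℕ → ℝ) (mCL : ℝ → ℝ → ℕ → ℕ → ℕ),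
    CountingProp eCL mCL ∧
    ∀ t k : ℕ, 1 ≤ t → 2 ≤ k →
      eRI t k < eCL (1/(t:ℝ)) (1/(t:ℝ)) (k-1) k / (4 * (t:ℝ) ^ (4^k))

/-- `max_i a_i` over `i ∈ [k−1]` -/
def maxA (k : ℕ) (a : ℕ → ℕ) : ℕ := (Finset.Icc 1 (k-1)).sup a

/-- `(ε, a, d)` is a regularity instance. -/
def RegInstance (eRI : ℕ → ℕ → ℝ) (k : ℕ) (ε : ℝ) (a : ℕ → ℕ) (d : Addr → ℝ) : Prop :=
  2 ≤ k ∧ (∀ j, 1 ≤ j → j ≤ k - 1 → 1 ≤ a j) ∧ 0 < ε ∧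
  ε ≤ eRI (maxA k a) k ∧ DensityFun k a d

section Counting

variable {W : Type} [Fintype W] [DecidableEq W]

/-- `S` spans an induced copy of `Fg` in `H` (both k-graphs). -/
def InducedCopy (Fg : Finset (Finset W)) (H : Finset (Finset V)) (k : ℕ) (S : Finset V) :
    Prop :=
  ∃ e : W → V, Function.Injective e ∧ Finset.univ.image e = S ∧
    ∀ A : Finset W, A.card = k → (A.image e ∈ H ↔ A ∈ Fg)

/-- the size of the automorphism group of `Fg` -/
def AutCount (Fg : Finset (Finset W)) : ℕ :=
  Nat.card {π : W ≃ W // ∀ A : Finset W, A.image π ∈ Fg ↔ A ∈ Fg}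

/-- the number `IC_σ(F, H)` of σ-induced copies of `Fg` in the complex `X` -/
def ICosig {l : ℕ} (X : Cx V l) (k : ℕ) (Fg : Finset (Finset W)) (σ : W ≃ Fin l) : ℕ :=
  Set.ncard {e : W → V |
    (∀ v, e v ∈ X.C (σ v)) ∧
    Finset.univ.image e ∈ X.KsetLvl (k-1) l ∧
    ∀ A : Finset W, A.card = k → (A.image e ∈ X.G k ↔ A ∈ Fg)}

/-- `IC(F, d, x̂, σ)` -/
def ICs (Fg : Finset (Finset W)) (k l : ℕ) (a : ℕ → ℕ) (d : Addr → ℝ)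
    (x : Addr) (σ : W → ℕ) : ℝ :=
  (∏ B ∈ x.1.powersetCard k,
    if ∃ A ∈ Fg, A.image σ = B then d (restrictA x (k-1) B)
    else 1 - d (restrictA x (k-1) B)) *
  ∏ j ∈ Finset.Icc 2 (k-1), ((a j : ℝ) ^ (l.choose j))⁻¹

/-- `IC(F, d, x̂)` -/
def ICa (Fg : Finset (Finset W)) (k l : ℕ) (a : ℕ → ℕ) (d : Addr → ℝ) (x : Addr) : ℝ :=
  (AutCount Fg : ℝ)⁻¹ *
    ∑ᶠ σ ∈ {σ : W → ℕ | Set.BijOn σ Set.univ ↑x.1}, ICs Fg k l a d x σ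

/-- `IC(F, d)` -/
def IC (Fg : Finset (Finset W)) (k l : ℕ) (a : ℕ → ℕ) (d : Addr → ℝ) : ℝ :=
  (((a 1).choose l : ℝ))⁻¹ * ∑ᶠ x ∈ {x : Addr | IsAddress l (k-1) a x}, ICa Fg k l a d x

end Counting

end

end HypReg

/-!
The cliques supported by the polyad with address `x` are exactly the crossing sets whose address
is `x`, so a partition is controlled address by address. A regularity instance makes every polyad
complex regular enough for the counting lemma, which gives at least `c * n ^ (j + 1)` cliques of
size `j + 1` in each `j`-polyad. The counting lemma needs class sizes within `λ < 1/4` of a common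
value, which `λ = 1/4` just misses, so all classes are first trimmed to the same size; this costs
a constant factor only. As `Q` differs from `P` in `O(ν n ^ j)` sets of size `j` on each polyad,
and each of them lies in at most `n` sets of size `j + 1`, only `O(ν n ^ (j + 1))` cliques are
spoilt. This is negligible against `ν ^ (1/6) * c * n ^ (j + 1)`, so that regularity survives with
the error increased by `ν ^ (1/6)`.
-/

namespace HypReg

open Finset Topology

attribute [local instance 10] Classical.propDecidable

lemma subset_of_forall_card_subset {α : Type*} {S W : Finset α} {n : ℕ} (hn : 1 ≤ n)
    (hS : n ≤ #S) (h : ∀ T ⊆ S, #T = n → T ⊆ W) : S ⊆ W := fun v hv => by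
  obtain ⟨T, hvT, hTS, hTc⟩ := exists_subsuperset_card_eq (singleton_subset_iff.2 hv)
    ((card_singleton v).trans_le hn) hS
  exact h T hTS hTc (singleton_subset_iff.1 hvT)

section CliqueOperators

variable {V : Type*} [DecidableEq V] {W W' : Finset V} {cr cr' A A' B B' : Finset (Finset V)}
  {j : ℕ} {ε ε' d : ℝ}

lemma mem_sing {U S : Finset V} : S ∈ (sing U : Finset (Finset V)) ↔ S ⊆ U ∧ #S = 1 := by
  simp only [sing, mem_image, card_eq_one]
  constructor
  · rintro ⟨v, hv, rfl⟩
    exact ⟨singleton_subset_iff.2 hv, v, rfl⟩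
  · rintro ⟨hS, v, rfl⟩
    exact ⟨v, singleton_subset_iff.1 hS, rfl⟩

lemma card_sing (U : Finset V) : #(sing U : Finset (Finset V)) = #U :=
  card_image_of_injective _ singleton_injective

lemma mem_KsetC_iff (hj : 1 ≤ j) (hcr : ∀ S ∈ cr, S ⊆ W ∧ #S = j + 1) {S : Finset V} :
    S ∈ KsetC W cr j (j + 1) B ↔
      S ⊆ W ∧ #S = j + 1 ∧ (∀ T ⊆ S, #T = j → T ∈ B) ∧ (j = 1 → S ∈ cr) := by
  rcases eq_or_ne j 1 with rfl | hj1
  · simp only [KsetC, if_pos, mem_filter, true_imp_iff]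
    refine ⟨fun ⟨hS, hB⟩ => ⟨(hcr S hS).1, (hcr S hS).2, fun T hT hTc => ?_, hS⟩,
      fun ⟨_, _, hB, hS⟩ => ⟨hS, fun v hv => hB _ (singleton_subset_iff.2 hv) (card_singleton v)⟩⟩
    obtain ⟨v, rfl⟩ := card_eq_one.1 hTc
    exact hB v (singleton_subset_iff.1 hT)
  · rw [KsetC, if_neg hj1, Kset]
    simp only [mem_filter, mem_powersetCard, hj1, false_imp_iff, and_true, and_imp, and_assoc]

lemma KsetC_mono (hB : B' ⊆ B) {i : ℕ} : KsetC W cr j i B' ⊆ KsetC W cr j i B := by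
  unfold KsetC Kset
  split_ifs
  · exact monotone_filter_right _ fun S _ hS v hv => hB (hS v hv)
  · exact monotone_filter_right _ fun S _ hS T hT => hB (hS T hT)

lemma KsetC_filter_subset (hj : 1 ≤ j) (hcr : ∀ S ∈ cr, S ⊆ W ∧ #S = j + 1) {U : Finset V} :
    KsetC W cr j (j + 1) {T ∈ B | T ⊆ U} = {S ∈ KsetC W cr j (j + 1) B | S ⊆ U} := by
  ext S
  simp only [mem_filter, mem_KsetC_iff hj hcr]
  constructor
  · rintro ⟨hSW, hSc, hB, hS⟩
    exact ⟨⟨hSW, hSc, fun T hT hTc => (hB T hT hTc).1, hS⟩,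
      subset_of_forall_card_subset hj (by omega) fun T hT hTc => (hB T hT hTc).2⟩
  · rintro ⟨⟨hSW, hSc, hB, hS⟩, hSU⟩
    exact ⟨hSW, hSc, fun T hT hTc => ⟨hB T hT hTc, hT.trans hSU⟩, hS⟩

lemma KsetC_eq_of_subset (hj : 1 ≤ j) (hcr : ∀ S ∈ cr, S ⊆ W ∧ #S = j + 1)
    (hcr' : ∀ S ∈ cr', S ⊆ W' ∧ #S = j + 1) (hW : W' ⊆ W) (hB : ∀ T ∈ B, T ⊆ W')
    (hcross : ∀ S ⊆ W', S ∈ cr ↔ S ∈ cr') :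
    KsetC W cr j (j + 1) B = KsetC W' cr' j (j + 1) B := by
  ext S
  rw [mem_KsetC_iff hj hcr, mem_KsetC_iff hj hcr']
  constructor
  · rintro ⟨-, hSc, hSB, hS⟩
    have hSW : S ⊆ W' := subset_of_forall_card_subset hj (by omega) fun T hT hTc =>
      hB T (hSB T hT hTc)
    exact ⟨hSW, hSc, hSB, fun hj1 => (hcross S hSW).1 (hS hj1)⟩
  · rintro ⟨hSW, hSc, hSB, hS⟩
    exact ⟨hSW.trans hW, hSc, hSB, fun hj1 => (hcross S hSW).2 (hS hj1)⟩

lemma RegPairC.congr (h : RegPairC W cr j ε d A B)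
    (hK : ∀ Q ⊆ B, KsetC W cr j (j + 1) Q = KsetC W' cr' j (j + 1) Q)
    (hA : ∀ S ∈ KsetC W cr j (j + 1) B, S ∈ A ↔ S ∈ A') : RegPairC W' cr' j ε d A' B := by
  intro Q hQ hcard
  rw [← hK Q hQ, ← hK B Subset.rfl] at hcard
  have hAQ : A' ∩ KsetC W cr j (j + 1) Q = A ∩ KsetC W cr j (j + 1) Q := by
    ext S
    simp only [mem_inter]
    exact and_congr_left fun hS => (hA S (KsetC_mono hQ hS)).symm
  rw [← hK Q hQ, hAQ]
  exact h Q hQ hcard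

lemma RegPairC.mono_right (h : RegPairC W cr j ε d A B) (hB : B' ⊆ B) (hε : ε ≤ ε')
    (hcard : ε * (#(KsetC W cr j (j + 1) B) : ℝ) ≤ ε' * (#(KsetC W cr j (j + 1) B') : ℝ)) :
    RegPairC W cr j ε' d A B' := fun Q hQ hQcard =>
  (h Q (hQ.trans hB) (hcard.trans hQcard)).trans (by gcongr)

lemma regPairC_of_cliques_eq_empty (hB : KsetC W cr j (j + 1) B = ∅) :
    RegPairC W cr j ε d A B := by
  intro Q hQ _
  simp [subset_empty.1 (hB ▸ KsetC_mono hQ)]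

end CliqueOperators

section Images

variable {α β : Type*} [DecidableEq β] {f : α → β} {S T : Finset α}

lemma filter_mem_image_eq (hS : Set.InjOn f S) (hT : T ⊆ S) : {v ∈ S | f v ∈ T.image f} = T := by
  ext v
  simp only [mem_filter, mem_image]
  exact ⟨fun ⟨hv, u, hu, huv⟩ => hS (hT hu) hv huv ▸ hu, fun hv => ⟨hT hv, v, hv, rfl⟩⟩

lemma card_image_of_subset_injOn (hS : Set.InjOn f S) (hT : T ⊆ S) : #(T.image f) = #T :=
  card_image_of_injOn (hS.mono (coe_subset.2 hT))

lemma exists_subset_image_eq (hS : Set.InjOn f S) {M : Finset β} (hM : M ⊆ S.image f) :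
    ∃ T ⊆ S, T.image f = M ∧ #T = #M := by
  obtain ⟨T, hT, rfl⟩ := subset_image_iff.1 hM
  have hTS : T ⊆ S := coe_subset.1 hT
  exact ⟨T, hTS, rfl, (card_image_of_subset_injOn hS hTS).symm⟩

lemma powersetCard_image_of_injOn (hS : Set.InjOn f S) (n : ℕ) :
    (S.image f).powersetCard n = (S.powersetCard n).image (image f) := by
  ext M
  simp only [mem_powersetCard, mem_image]
  constructor
  · rintro ⟨hM, hMn⟩
    obtain ⟨T, hT, rfl, hTM⟩ := exists_subset_image_eq hS hM
    exact ⟨T, ⟨hT, hTM.trans hMn⟩, rfl⟩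
  · rintro ⟨T, ⟨hT, hTn⟩, rfl⟩
    exact ⟨image_subset_image hT, (card_image_of_subset_injOn hS hT).trans hTn⟩

lemma card_image_le_card_image {γ : Type*} [DecidableEq γ] {s : Finset α} {g : α → γ}
    (h : ∀ u ∈ s, ∀ v ∈ s, f u = f v → g u = g v) :
    #(s.image g) ≤ #(s.image f) := by
  refine card_le_card_of_forall_subsingleton (fun z y => ∃ v ∈ s, g v = z ∧ f v = y) ?_ ?_
  · simp only [mem_image]
    rintro _ ⟨v, hv, rfl⟩
    exact ⟨f v, ⟨v, hv, rfl⟩, v, hv, rfl, rfl⟩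
  · rintro y - _ ⟨-, u, hu, rfl, huy⟩ _ ⟨-, v, hv, rfl, hvy⟩
    exact h u hu v hv (huy.trans hvy.symm)

lemma exists_eq_of_card_image {s : Finset α} {f : α → ℕ}
    {g : α → β} {m b : ℕ} (h : ∀ u ∈ s, ∀ v ∈ s, f u = f v → g u = g v)
    (hg : #(s.image g) = m) (hf : ∀ u ∈ s, 1 ≤ f u ∧ f u ≤ m) (hb : 1 ≤ b) (hbm : b ≤ m) :
    ∃ v ∈ s, f v = b := by
  have himage : s.image f = Icc 1 m := by
    refine eq_of_subset_of_card_le (image_subset_iff.2 fun u hu => mem_Icc.2 (hf u hu)) ?_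
    rw [Nat.card_Icc, Nat.add_sub_cancel, ← hg]
    exact card_image_le_card_image h
  exact mem_image.1 (himage ▸ mem_Icc.2 ⟨hb, hbm⟩)

end Images

namespace LabFam

section Addresses

variable {V : Type*} [DecidableEq V] {F : LabFam V} {k i j : ℕ} {a : ℕ → ℕ} {x : Addr}
  {S T : Finset V}

/-- The set `S` carries the labels prescribed by the address `x`: its vertices lie in classes with
index in the base of `x`, and its subsets of size between `2` and `j` have the labels given by `x`.
Unlike `F.addrOf j S = x`, this allows the base of `x` to be larger than the index set of `S`. -/
def Agrees (F : LabFam V) (j : ℕ) (x : Addr) (S : Finset V) : Prop :=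
  S.image F.vIdx ⊆ x.1 ∧
    ∀ T ⊆ S, 2 ≤ #T → #T ≤ j → F.lbl #T T = x.2 (T.image F.vIdx)

lemma Agrees.subset (h : F.Agrees j x S) (hT : T ⊆ S) : F.Agrees j x T :=
  ⟨(image_subset_image hT).trans h.1, fun T' hT' => h.2 T' (hT'.trans hT)⟩

lemma Agrees.of_le (h : F.Agrees j x S) (hij : i ≤ j) : F.Agrees i x S :=
  ⟨h.1, fun T hT hT2 hTi => h.2 T hT hT2 (hTi.trans hij)⟩

lemma agrees_iff_forall_card (hj : 1 ≤ j) (hS : j ≤ #S) :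
    F.Agrees j x S ↔ ∀ T ⊆ S, #T = j → F.Agrees j x T := by
  refine ⟨fun h T hT _ => h.subset hT, fun h => ⟨fun b hb => ?_, fun T hT hT2 hTj => ?_⟩⟩
  · obtain ⟨v, hv, rfl⟩ := mem_image.1 hb
    obtain ⟨T, hvT, hTS, hTc⟩ := exists_subsuperset_card_eq (singleton_subset_iff.2 hv)
      (by simpa using hj) hS
    exact (h T hTS hTc).1 (mem_image_of_mem _ (singleton_subset_iff.1 hvT))
  · obtain ⟨T', hTT', hT'S, hT'c⟩ := exists_subsuperset_card_eq hT hTj hS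
    exact (h T' hT'S hT'c).2 T hTT' hT2 hTj

lemma agrees_succ_iff (hj : 1 ≤ j) (hS : #S = j + 1) :
    F.Agrees (j + 1) x S ↔ F.Agrees j x S ∧ F.lbl (j + 1) S = x.2 (S.image F.vIdx) := by
  constructor
  · refine fun h => ⟨⟨h.1, fun T hT hT2 hTj => h.2 T hT hT2 (by omega)⟩, ?_⟩
    simpa [hS] using h.2 S Subset.rfl (by omega) hS.le
  · refine fun ⟨h, hlbl⟩ => ⟨h.1, fun T hT hT2 hTj => ?_⟩
    rcases hTj.lt_or_eq with hlt | heq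
    · exact h.2 T hT hT2 (by omega)
    · obtain rfl := eq_of_subset_of_card_le hT (by omega)
      rwa [hS]

lemma agrees_one_iff : F.Agrees 1 x S ↔ S.image F.vIdx ⊆ x.1 :=
  and_iff_left fun _ _ _ _ => by omega

lemma agrees_restrictA_iff (hS : Set.InjOn F.vIdx S) {B : Finset ℕ} (hB : B ⊆ x.1) :
    F.Agrees j (restrictA x j B) S ↔ S.image F.vIdx ⊆ B ∧ F.Agrees j x S := by
  have hlabel : S.image F.vIdx ⊆ B → ∀ T ⊆ S, 2 ≤ #T → #T ≤ j →
      (restrictA x j B).2 (T.image F.vIdx) = x.2 (T.image F.vIdx) := fun hSB T hT hT2 hTj =>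
    if_pos ⟨(image_subset_image hT).trans hSB, by
      rw [card_image_of_subset_injOn hS hT]
      exact ⟨hT2, hTj⟩⟩
  constructor
  · refine fun h => ⟨h.1, h.1.trans hB, fun T hT hT2 hTj => ?_⟩
    rw [h.2 T hT hT2 hTj, hlabel h.1 T hT hT2 hTj]
  · refine fun ⟨hSB, h⟩ => ⟨hSB, fun T hT hT2 hTj => ?_⟩
    rw [h.2 T hT hT2 hTj, hlabel hSB T hT hT2 hTj]

/-- Labels of `x` are only recorded for subsets of its base of size between `2` and `j`. -/
def SupportedBelow (j : ℕ) (x : Addr) : Prop :=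
  ∀ L : Finset ℕ, ¬(L ⊆ x.1 ∧ 2 ≤ #L ∧ #L ≤ j) → x.2 L = 0

lemma supportedBelow_restrictA (x : Addr) (j : ℕ) (B : Finset ℕ) :
    SupportedBelow j (restrictA x j B) := fun _ hL => if_neg hL

lemma supportedBelow_addrOf (F : LabFam V) (j : ℕ) (S : Finset V) :
    SupportedBelow j (F.addrOf j S) := fun _ hL => if_neg hL

lemma addrOf_snd_image (hS : Set.InjOn F.vIdx S) (hT : T ⊆ S) (hT2 : 2 ≤ #T) (hTj : #T ≤ j) :
    (F.addrOf j S).2 (T.image F.vIdx) = F.lbl #T T := by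
  have hcard := card_image_of_subset_injOn hS hT
  simp only [addrOf]
  rw [hcard, if_pos ⟨image_subset_image hT, hT2, hTj⟩, filter_mem_image_eq hS hT]

lemma agrees_addrOf (hS : Set.InjOn F.vIdx S) : F.Agrees j (F.addrOf j S) S :=
  ⟨Subset.rfl, fun _ hT hT2 hTj => (addrOf_snd_image hS hT hT2 hTj).symm⟩

lemma addrOf_eq_iff (hS : Set.InjOn F.vIdx S) (hx : SupportedBelow j x) :
    F.addrOf j S = x ↔ #S = #x.1 ∧ F.Agrees j x S := by
  constructor
  · rintro rfl
    exact ⟨(card_image_of_injOn hS).symm, agrees_addrOf hS⟩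
  rintro ⟨hcard, h⟩
  have hbase : S.image F.vIdx = x.1 :=
    eq_of_subset_of_card_le h.1 (by rw [card_image_of_injOn hS, hcard])
  refine Prod.ext hbase (funext fun M => ?_)
  by_cases hM : M ⊆ x.1 ∧ 2 ≤ #M ∧ #M ≤ j
  · obtain ⟨T, hT, rfl, hTM⟩ := exists_subset_image_eq hS (hbase.symm ▸ hM.1)
    rw [← hTM] at hM
    rw [addrOf_snd_image hS hT hM.2.1 hM.2.2, h.2 T hT hM.2.1 hM.2.2]
  · rw [hx M hM, supportedBelow_addrOf F j S M (by rwa [show (F.addrOf j S).1 = x.1 from hbase])]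

lemma restrictA_addrOf_image (hS : Set.InjOn F.vIdx S) (hT : T ⊆ S) (hij : i ≤ j) :
    restrictA (F.addrOf j S) i (T.image F.vIdx) = F.addrOf i T := by
  have hTinj : Set.InjOn F.vIdx T := hS.mono (coe_subset.2 hT)
  refine ((addrOf_eq_iff hTinj (supportedBelow_restrictA _ _ _)).2
    ⟨(card_image_of_injOn hTinj).symm, ?_⟩).symm
  refine (agrees_restrictA_iff hTinj (image_subset_image hT)).2 ⟨Subset.rfl, ?_⟩
  exact ((agrees_addrOf hS).subset hT).of_le hij

lemma mem_partAt_succ (hj : 1 ≤ j) {b : ℕ} {I : Finset V} :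
    I ∈ F.partAt (j + 1) x b ↔
      I ∈ F.cross (j + 1) ∧ F.addrOf j I = x ∧ F.lbl (j + 1) I = b := by
  rw [partAt, if_neg (by omega), mem_filter, Nat.add_sub_cancel]

lemma cross_subset_card (F : LabFam V) (i : ℕ) :
    ∀ S ∈ F.cross i, S ⊆ F.gnd ∧ #S = i := fun _ hS =>
  mem_powersetCard.1 (mem_filter.1 hS).1

lemma IsLabeled.mem_cross (hF : F.IsLabeled k a) :
    S ∈ F.cross i ↔ S ⊆ F.gnd ∧ #S = i ∧ Set.InjOn F.vIdx S := by
  simp only [PartFam.cross, mem_filter, mem_powersetCard, and_assoc]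
  refine and_congr_right fun hS => and_congr_right fun _ => ?_
  have hiff : ∀ u ∈ S, ∀ v ∈ S, (F.vIdx u = F.vIdx v ↔ F.vClass u = F.vClass v) :=
    fun u hu v hv => hF.2.2.1 u (hS hu) v (hS hv)
  refine ⟨fun h u hu v hv huv => ?_, fun h u hu v hv hne hc =>
    hne (h hu hv ((hiff u hu v hv).2 hc))⟩
  by_contra hne
  exact h u hu v hv hne ((hiff u hu v hv).1 huv)

lemma IsLabeled.subset_mem_cross (hF : F.IsLabeled k a) (hS : S ∈ F.cross i) (hT : T ⊆ S) :
    T ∈ F.cross #T :=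
  have hS := hF.mem_cross.1 hS
  hF.mem_cross.2 ⟨hT.trans hS.1, rfl, hS.2.2.mono (coe_subset.2 hT)⟩

lemma IsLabeled.mem_cross_one (hF : F.IsLabeled k a) : S ∈ F.cross 1 ↔ S ⊆ F.gnd ∧ #S = 1 := by
  rw [hF.mem_cross]
  refine and_congr_right fun _ => and_iff_left_of_imp fun hS => ?_
  obtain ⟨v, rfl⟩ := card_eq_one.1 hS
  exact coe_singleton v ▸ Set.injOn_singleton F.vIdx v

/-- Two vertices with the same index lie in a common `j`-set, so crossing is a local property. -/
lemma IsLabeled.mem_cross_of_forall_card (hF : F.IsLabeled k a) (hj : 2 ≤ j) (hS : #S = j + 1)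
    (h : ∀ T ⊆ S, #T = j → T ∈ F.cross j) : S ∈ F.cross (j + 1) := by
  have hpair : ∀ u ∈ S, ∀ v ∈ S, ∃ T ∈ F.cross j, u ∈ T ∧ v ∈ T := fun u hu v hv => by
    obtain ⟨T, huvT, hTS, hTc⟩ := exists_subsuperset_card_eq (n := j)
      (insert_subset hu (singleton_subset_iff.2 hv)) (card_le_two.trans hj) (by omega)
    exact ⟨T, h T hTS hTc, huvT (by simp), huvT (by simp)⟩
  refine hF.mem_cross.2 ⟨fun v hv => ?_, hS, fun u hu v hv huv => ?_⟩
  · obtain ⟨T, hT, hvT, -⟩ := hpair v hv v hv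
    exact (hF.mem_cross.1 hT).1 hvT
  · obtain ⟨T, hT, huT, hvT⟩ := hpair u hu v hv
    exact (hF.mem_cross.1 hT).2.2 huT hvT huv

lemma IsLabeled.mem_polyAt (hF : F.IsLabeled k a) (hj : 1 ≤ j) :
    S ∈ F.polyAt j x ↔ S ∈ F.cross j ∧ F.Agrees j x S := by
  rcases hj.lt_or_eq' with hj2 | rfl
  · obtain ⟨j, rfl⟩ := Nat.exists_eq_add_of_le' hj
    replace hj2 : 1 ≤ j := by omega
    simp only [polyAt, if_neg (show j + 1 ≠ 1 by omega), mem_sup, mem_powersetCard,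
      Nat.add_sub_cancel, mem_partAt_succ hj2]
    constructor
    · rintro ⟨B, ⟨hB, hBc⟩, hS, haddr, hlbl⟩
      obtain ⟨-, hSc, hinj⟩ := hF.mem_cross.1 hS
      obtain ⟨hSB, h⟩ := (agrees_restrictA_iff hinj hB).1
        ((addrOf_eq_iff hinj (supportedBelow_restrictA _ _ _)).1 haddr).2
      have hbase : S.image F.vIdx = B :=
        eq_of_subset_of_card_le hSB (by rw [card_image_of_injOn hinj, hSc, hBc])
      exact ⟨hS, (agrees_succ_iff hj2 hSc).2 ⟨h, hbase.symm ▸ hlbl⟩⟩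
    · rintro ⟨hS, h⟩
      obtain ⟨-, hSc, hinj⟩ := hF.mem_cross.1 hS
      obtain ⟨h, hlbl⟩ := (agrees_succ_iff hj2 hSc).1 h
      have hcard : #(S.image F.vIdx) = j + 1 := (card_image_of_injOn hinj).trans hSc
      exact ⟨S.image F.vIdx, ⟨h.1, hcard⟩, hS,
        (addrOf_eq_iff hinj (supportedBelow_restrictA _ _ _)).2 ⟨hSc.trans hcard.symm,
          (agrees_restrictA_iff hinj h.1).2 ⟨Subset.rfl, h⟩⟩, hlbl⟩
  · have hfilter : S ⊆ {v ∈ F.gnd | F.vIdx v ∈ x.1} ↔ S ⊆ F.gnd ∧ S.image F.vIdx ⊆ x.1 := by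
      rw [image_subset_iff]
      simp only [subset_iff, mem_filter, imp_and, forall_and]
    rw [polyAt, if_pos rfl, mem_sing, hF.mem_cross_one, agrees_one_iff, hfilter]
    tauto

/-- The clique set `K_{j+1}(P̂^{(j)}(x̂))` of the level-`j` polyad at the address `x`. -/
noncomputable def cliques (F : LabFam V) (j : ℕ) (x : Addr) : Finset (Finset V) :=
  KsetC F.gnd (F.cross (j + 1)) j (j + 1) (F.polyAt j x)

lemma IsLabeled.mem_cliques (hF : F.IsLabeled k a) (hj : 1 ≤ j) :
    S ∈ F.cliques j x ↔ S ∈ F.cross (j + 1) ∧ F.Agrees j x S := by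
  rw [cliques, mem_KsetC_iff hj (F.cross_subset_card _)]
  constructor
  · rintro ⟨-, hSc, hpoly, hcr⟩
    simp only [hF.mem_polyAt hj] at hpoly
    refine ⟨?_, (agrees_iff_forall_card hj (by omega)).2 fun T hT hTc => (hpoly T hT hTc).2⟩
    rcases hj.lt_or_eq' with hj2 | hj1
    · exact hF.mem_cross_of_forall_card hj2 hSc fun T hT hTc => (hpoly T hT hTc).1
    · exact hcr hj1
  · rintro ⟨hS, h⟩
    obtain ⟨hSg, hSc⟩ := F.cross_subset_card _ S hS
    refine ⟨hSg, hSc, fun T hT hTc => ?_, fun _ => hS⟩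
    exact (hF.mem_polyAt hj).2 ⟨hTc ▸ hF.subset_mem_cross hS hT, h.subset hT⟩

lemma IsLabeled.mem_cliques_iff_addrOf (hF : F.IsLabeled k a) (hj : 1 ≤ j)
    (hx : IsAddress (j + 1) j a x) :
    S ∈ F.cliques j x ↔ S ∈ F.cross (j + 1) ∧ F.addrOf j S = x := by
  rw [hF.mem_cliques hj]
  refine and_congr_right fun hS => ?_
  obtain ⟨-, hSc, hinj⟩ := hF.mem_cross.1 hS
  rw [addrOf_eq_iff hinj hx.2.2.2, hSc, hx.1]
  exact (and_iff_right rfl).symm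

lemma IsLabeled.isAddress_addrOf (hF : F.IsLabeled k a) (hS : S ∈ F.cross i) (hj : j ≤ k - 1) :
    IsAddress i j a (F.addrOf j S) := by
  obtain ⟨hSg, hSc, hinj⟩ := hF.mem_cross.1 hS
  refine ⟨(card_image_of_injOn hinj).trans hSc, fun b hb => ?_, fun L hL hL2 hLj => ?_,
    supportedBelow_addrOf F j S⟩
  · obtain ⟨v, hv, rfl⟩ := mem_image.1 hb
    exact hF.2.1 v (hSg hv)
  · obtain ⟨T, hT, rfl, hTL⟩ := exists_subset_image_eq hinj hL
    rw [← hTL] at hL2 hLj ⊢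
    rw [addrOf_snd_image hinj hT hL2 hLj]
    exact (hF.2.2.2 #T hL2 (by omega)).1 T (hF.subset_mem_cross hS hT)

lemma isAddress_restrictA (hx : IsAddress i j a x) {l : ℕ} (hl : l ≤ j) {B : Finset ℕ}
    (hB : B ⊆ x.1) : IsAddress #B l a (restrictA x l B) := by
  refine ⟨rfl, fun b hb => hx.2.1 b (hB hb), fun L hL hL2 hLl => ?_,
    supportedBelow_restrictA x l B⟩
  rw [show (restrictA x l B).2 L = x.2 L from if_pos ⟨hL, hL2, hLl⟩]
  exact hx.2.2.1 L (Subset.trans hL hB) hL2 (hLl.trans hl)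

end Addresses

section Polyads

variable {V : Type*} [DecidableEq V] {F : LabFam V} {k i j : ℕ} {a : ℕ → ℕ} {K T : Finset V}

lemma IsLabeled.vClass_eq (hF : F.IsLabeled k a) {v : V} (hv : v ∈ F.gnd) :
    F.vClass v = {u ∈ F.gnd | F.vIdx u = F.vIdx v} := by
  ext u
  simp only [mem_filter]
  constructor
  · intro hu
    have hug : u ∈ F.gnd := hF.1.2.1 v hv hu
    exact ⟨hug, (hF.2.2.1 u hug v hv).2 (hF.1.2.2.1 u hug v hv hu)⟩
  · rintro ⟨hug, huv⟩
    rw [← (hF.2.2.1 u hug v hv).1 huv]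
    exact hF.1.1 u hug

lemma IsLabeled.polyad_one (hF : F.IsLabeled k a) (hK : K ∈ F.cross i) :
    F.polyad 1 K = F.polyAt 1 (F.addrOf 1 K) := by
  have hclass : ∀ u ∈ K, F.vClass u = {v ∈ F.gnd | F.vIdx v = F.vIdx u} :=
    fun u hu => hF.vClass_eq ((hF.mem_cross.1 hK).1 hu)
  rw [PartFam.polyad, polyAt, if_pos rfl, if_pos rfl, sup_congr rfl hclass]
  congr 1
  ext v
  simp only [mem_sup, mem_filter, addrOf, mem_image]
  exact ⟨fun ⟨u, hu, hv, huv⟩ => ⟨hv, u, hu, huv.symm⟩,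
    fun ⟨hv, u, hu, huv⟩ => ⟨u, hu, hv, huv.symm⟩⟩

/-- Each polyad decides the parts one level up, and these decide the next polyad: this and
`cls_eq_partAt_of_polyad_eq` are the two halves of that recursion. -/
lemma IsLabeled.polyad_succ_of_cls_eq (hF : F.IsLabeled k a) (hj : 1 ≤ j)
    (hcls : ∀ T ∈ F.cross (j + 1), F.cls (j + 1) T =
      F.partAt (j + 1) (F.addrOf j T) (F.lbl (j + 1) T)) (hK : K ∈ F.cross i) :
    F.polyad (j + 1) K = F.polyAt (j + 1) (F.addrOf (j + 1) K) := by
  have hinj := (hF.mem_cross.1 hK).2.2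
  rw [PartFam.polyad, polyAt, if_neg (by omega), if_neg (by omega),
    show (F.addrOf (j + 1) K).1 = K.image F.vIdx from rfl, powersetCard_image_of_injOn hinj,
    sup_image]
  refine sup_congr rfl fun T hT => ?_
  obtain ⟨hTK, hTc⟩ := mem_powersetCard.1 hT
  rw [hcls T (hTc ▸ hF.subset_mem_cross hK hTK), Function.comp_apply, Nat.add_sub_cancel,
    restrictA_addrOf_image hinj hTK j.le_succ, addrOf_snd_image hinj hTK (by omega) hTc.le, hTc]

lemma IsLabeled.cls_eq_partAt_of_polyad_eq (hF : F.IsLabeled k a) (hj : 1 ≤ j)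
    (hjk : j + 1 ≤ k - 1)
    (hpoly : ∀ T ∈ F.cross (j + 1), F.polyad j T = F.polyAt j (F.addrOf j T))
    (hT : T ∈ F.cross (j + 1)) :
    F.cls (j + 1) T = F.partAt (j + 1) (F.addrOf j T) (F.lbl (j + 1) T) := by
  obtain ⟨hmem, -, hclique, -, -⟩ := hF.1.2.2.2.2.2 (j + 1) (by omega) hjk
  obtain ⟨-, hlbl, hcls⟩ := hF.2.2.2 (j + 1) (by omega) hjk
  simp only [Nat.add_sub_cancel] at hcls
  ext I
  rw [mem_partAt_succ hj]
  constructor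
  · intro hI
    have hIclique : I ∈ F.cliques j (F.addrOf j T) := by
      have := hclique T hT hI
      rwa [PartFam.polyCliques, Nat.add_sub_cancel, hpoly T hT] at this
    obtain ⟨hIcr, haddr⟩ :=
      (hF.mem_cliques_iff_addrOf hj (hF.isAddress_addrOf hT (by omega))).1 hIclique
    exact ⟨hIcr, haddr, hlbl T hT I hI⟩
  · rintro ⟨hIcr, haddr, hIlbl⟩
    rw [← hcls I hIcr T hT (by rw [hpoly I hIcr, hpoly T hT, haddr]) hIlbl]
    exact hmem I hIcr

lemma IsLabeled.polyad_eq (hF : F.IsLabeled k a) (hj : 1 ≤ j) (hjk : j ≤ k - 1)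
    (hK : K ∈ F.cross i) : F.polyad j K = F.polyAt j (F.addrOf j K) := by
  induction j, hj using Nat.le_induction generalizing i K with
  | base => exact hF.polyad_one hK
  | succ j hj ih =>
    exact hF.polyad_succ_of_cls_eq hj
      (fun T => hF.cls_eq_partAt_of_polyad_eq hj hjk fun T => ih (by omega)) hK

end Polyads

section Labels

variable {V : Type*} [DecidableEq V] {F : LabFam V} {k i j b : ℕ} {a : ℕ → ℕ} {x : Addr} {ε : ℝ}
  {J K S : Finset V}

lemma IsLabeled.exists_vIdx_eq (hF : F.IsLabeled k a) (hb : 1 ≤ b) (hba : b ≤ a 1) :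
    ∃ v ∈ F.gnd, F.vIdx v = b :=
  exists_eq_of_card_image (fun u hu v hv h => (hF.2.2.1 u hu v hv).1 h) hF.1.2.2.2.1 hF.2.1 hb hba

lemma IsLabeled.exists_insert_mem_cross (hF : F.IsLabeled k a) (hi : i < a 1)
    (hJ : J ∈ F.cross i) : ∃ v, insert v J ∈ F.cross (i + 1) := by
  obtain ⟨hJg, hJc, hinj⟩ := hF.mem_cross.1 hJ
  obtain ⟨b, hb, hbJ⟩ : ∃ b ∈ Icc 1 (a 1), b ∉ J.image F.vIdx :=
    exists_mem_notMem_of_card_lt_card (by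
      rwa [card_image_of_injOn hinj, hJc, Nat.card_Icc, Nat.add_sub_cancel])
  obtain ⟨v, hv, rfl⟩ := hF.exists_vIdx_eq (mem_Icc.1 hb).1 (mem_Icc.1 hb).2
  have hvJ : v ∉ J := fun hvJ => hbJ (mem_image_of_mem _ hvJ)
  refine ⟨v, hF.mem_cross.2 ⟨insert_subset hv hJg, by rw [card_insert_of_notMem hvJ, hJc], ?_⟩⟩
  rw [coe_insert, Set.injOn_insert (by simpa using hvJ)]
  exact ⟨hinj, by simpa using hbJ⟩

lemma IsLabeled.exists_mem_cross_superset (hF : F.IsLabeled k a) (hJ : J ∈ F.cross i)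
    (hi : i ≤ k) : ∃ K ∈ F.cross k, J ⊆ K := by
  suffices h : ∀ l, i ≤ l → l ≤ a 1 → ∃ K ∈ F.cross l, J ⊆ K from h k hi hF.1.2.2.2.2.1
  intro l hil
  induction l, hil using Nat.le_induction with
  | base => exact fun _ => ⟨J, hJ, Subset.rfl⟩
  | succ l _ ih =>
    intro hla
    obtain ⟨K, hK, hJK⟩ := ih (by omega)
    obtain ⟨v, hv⟩ := hF.exists_insert_mem_cross hla hK
    exact ⟨insert v K, hv, hJK.trans (subset_insert v K)⟩

lemma IsLabeled.exists_lbl_eq (hF : F.IsLabeled k a) (hj : 1 ≤ j) (hjk : j + 1 ≤ k - 1)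
    (hJ : J ∈ F.cross (j + 1)) (hb : 1 ≤ b) (hba : b ≤ a (j + 1)) :
    ∃ I ∈ F.cross (j + 1), F.addrOf j I = F.addrOf j J ∧ F.lbl (j + 1) I = b := by
  obtain ⟨-, -, -, -, hcount⟩ := hF.1.2.2.2.2.2 (j + 1) (by omega) hjk
  obtain ⟨hlbl, -, hcls⟩ := hF.2.2.2 (j + 1) (by omega) hjk
  simp only [Nat.add_sub_cancel] at hcls
  have hclique : ∀ I ∈ F.polyCliques (j + 1) J,
      I ∈ F.cross (j + 1) ∧ F.addrOf j I = F.addrOf j J := fun I hI => by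
    rw [PartFam.polyCliques, Nat.add_sub_cancel, hF.polyad_eq hj (by omega) hJ] at hI
    exact (hF.mem_cliques_iff_addrOf hj (hF.isAddress_addrOf hJ (by omega))).1 hI
  have hlbl_cls : ∀ I ∈ F.polyCliques (j + 1) J, ∀ I' ∈ F.polyCliques (j + 1) J,
      F.lbl (j + 1) I = F.lbl (j + 1) I' → F.cls (j + 1) I = F.cls (j + 1) I' := by
    intro I hI I' hI'
    obtain ⟨hIcr, haddr⟩ := hclique I hI
    obtain ⟨hI'cr, haddr'⟩ := hclique I' hI'
    refine hcls I hIcr I' hI'cr ?_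
    rw [hF.polyad_eq hj (by omega) hIcr, hF.polyad_eq hj (by omega) hI'cr, haddr, haddr']
  obtain ⟨I, hI, hIb⟩ := exists_eq_of_card_image hlbl_cls (hcount J hJ)
    (fun I hI => hlbl I (hclique I hI).1) hb hba
  exact ⟨I, (hclique I hI).1, (hclique I hI).2, hIb⟩

lemma IsLabeled.mem_polyAt_succ_iff (hF : F.IsLabeled k a) (hj : 1 ≤ j) {B : Finset ℕ}
    (hB : B ⊆ x.1) (hBc : #B = j + 1) (hS : S ∈ F.cliques j (restrictA x j B)) :
    S ∈ F.polyAt (j + 1) x ↔ S ∈ F.partAt (j + 1) (restrictA x j B) (x.2 B) := by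
  obtain ⟨hScr, h⟩ := (hF.mem_cliques hj).1 hS
  obtain ⟨-, hSc, hinj⟩ := hF.mem_cross.1 hScr
  have hbase : S.image F.vIdx = B :=
    eq_of_subset_of_card_le h.1 (by rw [card_image_of_injOn hinj, hSc, hBc])
  have haddr : F.addrOf j S = restrictA x j B :=
    (addrOf_eq_iff hinj (supportedBelow_restrictA _ _ _)).2 ⟨hSc.trans hBc.symm, h⟩
  rw [hF.mem_polyAt (by omega), mem_partAt_succ hj, agrees_succ_iff hj hSc, hbase]
  simp only [hScr, ((agrees_restrictA_iff hinj hB).1 h).2, haddr, true_and]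

/-- `A` is `(ε, d)`-regular with respect to the level-`j` polyad at the address `x`. -/
def RegAt (F : LabFam V) (j : ℕ) (ε d : ℝ) (x : Addr) (A : Finset (Finset V)) : Prop :=
  RegPairC F.gnd (F.cross (j + 1)) j ε d A (F.polyAt j x)

lemma RegAt.congr {d : ℝ} {A A' : Finset (Finset V)} (h : F.RegAt j ε d x A)
    (hA : ∀ S ∈ F.cliques j x, S ∈ A ↔ S ∈ A') : F.RegAt j ε d x A' :=
  RegPairC.congr h (fun _ _ => rfl) hA

lemma IsLabeled.regPairC_polyad_iff (hF : F.IsLabeled k a) (hj : 1 ≤ j) (hjk : j + 1 ≤ k - 1)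
    (hK : K ∈ F.cross k) (hJ : J ∈ K.powersetCard (j + 1)) {d : ℝ} :
    RegPairC F.gnd (F.cross (j + 1)) j ε d (F.polyad (j + 1) K) (F.polyad j J) ↔
      F.RegAt j ε d (F.addrOf j J) (F.partAt (j + 1) (F.addrOf j J) (F.lbl (j + 1) J)) := by
  obtain ⟨hJK, hJc⟩ := mem_powersetCard.1 hJ
  have hinj := (hF.mem_cross.1 hK).2.2
  rw [hF.polyad_eq (by omega) hjk hK, hF.polyad_eq hj (by omega) (hF.subset_mem_cross hK hJK),
    ← restrictA_addrOf_image hinj hJK j.le_succ, ← hJc,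
    ← addrOf_snd_image hinj hJK (by omega) le_rfl, hJc]
  have hparts : ∀ S ∈ F.cliques j (restrictA (F.addrOf (j + 1) K) j (J.image F.vIdx)), _ :=
    fun S => hF.mem_polyAt_succ_iff hj (x := F.addrOf (j + 1) K) (image_subset_image hJK)
      ((card_image_of_subset_injOn hinj hJK).trans hJc)
  exact ⟨fun h => RegAt.congr h hparts, fun h => RegAt.congr h fun S hS => (hparts S hS).symm⟩

lemma IsLabeled.polyadReg_iff (hF : F.IsLabeled k a) :
    F.PolyadReg k a ε ↔ ∀ j, 1 ≤ j → j + 1 ≤ k - 1 → ∀ x, IsAddress (j + 1) j a x →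
      ∀ b, 1 ≤ b → b ≤ a (j + 1) →
        F.RegAt j ε (1 / (a (j + 1) : ℝ)) x (F.partAt (j + 1) x b) := by
  constructor
  · intro h j hj hjk x hx b hb hba
    rcases (F.cliques j x).eq_empty_or_nonempty with hempty | ⟨J, hJ⟩
    · exact regPairC_of_cliques_eq_empty hempty
    obtain ⟨hJcr, rfl⟩ := (hF.mem_cliques_iff_addrOf hj hx).1 hJ
    obtain ⟨I, hI, haddr, rfl⟩ := hF.exists_lbl_eq hj hjk hJcr hb hba
    obtain ⟨K, hK, hIK⟩ := hF.exists_mem_cross_superset hI (by omega)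
    have hIKc : I ∈ K.powersetCard (j + 1) :=
      mem_powersetCard.2 ⟨hIK, (F.cross_subset_card _ I hI).2⟩
    rw [← haddr]
    exact (hF.regPairC_polyad_iff hj hjk hK hIKc).1 (h K hK (j + 1) (by omega) hjk I hIKc)
  · intro h K hK l hl hlk J hJ
    obtain ⟨j, rfl⟩ := Nat.exists_eq_add_of_le' (show 1 ≤ l by omega)
    obtain ⟨hJK, hJc⟩ := mem_powersetCard.1 hJ
    have hJcr : J ∈ F.cross (j + 1) := hJc ▸ hF.subset_mem_cross hK hJK
    obtain ⟨hb, hba⟩ := (hF.2.2.2 (j + 1) hl hlk).1 J hJcr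
    exact (hF.regPairC_polyad_iff (by omega) hlk hK hJ).2
      (h j (by omega) hlk _ (hF.isAddress_addrOf hJcr (by omega)) _ hb hba)

end Labels

section AddrComplex

variable {V : Type*} [DecidableEq V] {F : LabFam V} {k i j l : ℕ} {a : ℕ → ℕ} {x : Addr}
  {U S : Finset V} {σ : Fin l → ℕ} {L : Finset (Fin l)} {ε ε' d : ℝ}

/-- The complex formed inside `U` by the polyads of the address `x`; its `i`-th class consists of
the vertices of `U` in the class with index `σ i`. -/
noncomputable def addrComplex (F : LabFam V) (U : Finset V) (x : Addr) (σ : Fin l → ℕ) :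
    Cx V l where
  C i := {v ∈ U | F.vIdx v = σ i}
  G i := {S ∈ F.polyAt i x | S ⊆ U}

lemma mem_addrComplex_C {t : Fin l} {v : V} :
    v ∈ (F.addrComplex U x σ).C t ↔ v ∈ U ∧ F.vIdx v = σ t := mem_filter

lemma mem_addrComplex_G : S ∈ (F.addrComplex U x σ).G i ↔ S ∈ F.polyAt i x ∧ S ⊆ U := mem_filter

lemma subset_sup_addrComplex_C :
    S ⊆ L.sup (F.addrComplex U x σ).C ↔ S ⊆ U ∧ S.image F.vIdx ⊆ L.image σ := by
  have hmem : ∀ v, v ∈ L.sup (F.addrComplex U x σ).C ↔ v ∈ U ∧ F.vIdx v ∈ L.image σ := by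
    intro v
    simp only [mem_sup, mem_addrComplex_C, mem_image]
    grind
  rw [image_subset_iff]
  simp only [subset_iff, hmem, imp_and, forall_and]

lemma subset_addrComplex_gnd (hσ : univ.image σ = x.1) :
    S ⊆ (F.addrComplex U x σ).gnd ↔ S ⊆ U ∧ S.image F.vIdx ⊆ x.1 :=
  hσ ▸ subset_sup_addrComplex_C

lemma IsLabeled.mem_addrComplex_cross (hF : F.IsLabeled k a) (hU : U ⊆ F.gnd)
    (hσ : univ.image σ = x.1) :
    S ∈ (F.addrComplex U x σ).cross i ↔ S ∈ F.cross i ∧ S ⊆ (F.addrComplex U x σ).gnd := by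
  simp only [Cx.cross, mem_filter, mem_powersetCard, card_le_one, mem_inter, mem_addrComplex_C]
  rw [hF.mem_cross]
  constructor
  · rintro ⟨⟨hS, hSc⟩, hinj⟩
    obtain ⟨hSU, hSx⟩ := (subset_addrComplex_gnd hσ).1 hS
    refine ⟨⟨hSU.trans hU, hSc, fun u hu v hv huv => ?_⟩, hS⟩
    obtain ⟨t, -, ht⟩ := mem_image.1 (hσ ▸ hSx (mem_image_of_mem _ hu))
    exact hinj t u ⟨hu, hSU hu, ht.symm⟩ v ⟨hv, hSU hv, huv ▸ ht.symm⟩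
  · rintro ⟨⟨-, hSc, hinj⟩, hS⟩
    exact ⟨⟨hS, hSc⟩, fun t u ⟨hu, _, hut⟩ v ⟨hv, _, hvt⟩ => hinj hu hv (hut.trans hvt.symm)⟩

lemma IsLabeled.addrComplex_G_subset_cross (hF : F.IsLabeled k a) (hU : U ⊆ F.gnd)
    (hσ : univ.image σ = x.1) (hi : 1 ≤ i) :
    (F.addrComplex U x σ).G i ⊆ (F.addrComplex U x σ).cross i := fun S hS => by
  obtain ⟨hSx, hSU⟩ := mem_addrComplex_G.1 hS
  obtain ⟨hScr, h⟩ := (hF.mem_polyAt hi).1 hSx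
  exact (hF.mem_addrComplex_cross hU hσ).2 ⟨hScr, (subset_addrComplex_gnd hσ).2 ⟨hSU, h.1⟩⟩

lemma IsLabeled.isComplex_addrComplex (hF : F.IsLabeled k a) (hU : U ⊆ F.gnd)
    (hσ : univ.image σ = x.1) (hinj : Function.Injective σ) :
    (F.addrComplex U x σ).IsComplex j := by
  refine ⟨fun s t hst => disjoint_left.2 fun v hs ht => ?_,
    fun i hi _ => hF.addrComplex_G_subset_cross hU hσ (by omega), fun i hi _ S hS => ?_⟩
  · exact hst (hinj ((mem_addrComplex_C.1 hs).2.symm.trans (mem_addrComplex_C.1 ht).2))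
  · obtain ⟨hScr, hSg⟩ := (hF.mem_addrComplex_cross hU hσ).1
      (hF.addrComplex_G_subset_cross hU hσ (by omega) hS)
    obtain ⟨hSx, hSU⟩ := mem_addrComplex_G.1 hS
    have hagree : F.Agrees i x S := ((hF.mem_polyAt (by omega)).1 hSx).2
    refine mem_filter.2 ⟨mem_powersetCard.2 ⟨hSg, (F.cross_subset_card _ S hScr).2⟩, ?_⟩
    intro T hT
    obtain ⟨hTS, hTc⟩ := mem_powersetCard.1 hT
    exact mem_addrComplex_G.2 ⟨(hF.mem_polyAt (by omega)).2
      ⟨hTc ▸ hF.subset_mem_cross hScr hTS, (hagree.subset hTS).of_le (by omega)⟩, hTS.trans hSU⟩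

lemma IsLabeled.addrComplex_restr (hF : F.IsLabeled k a) (hU : U ⊆ F.gnd)
    (hσ : univ.image σ = x.1) (hi : 1 ≤ i) :
    (F.addrComplex U x σ).restr i L =
      {T ∈ F.polyAt i (restrictA x i (L.image σ)) | T ⊆ U} := by
  have hL : L.image σ ⊆ x.1 := hσ ▸ image_subset_image (subset_univ L)
  ext T
  rw [mem_filter, hF.mem_polyAt hi, Cx.restr]
  split_ifs with hi1
  · subst hi1
    rw [mem_sing, subset_sup_addrComplex_C, hF.mem_cross_one, agrees_one_iff]
    exact ⟨fun ⟨⟨hTU, hTL⟩, hTc⟩ => ⟨⟨⟨hTU.trans hU, hTc⟩, hTL⟩, hTU⟩,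
      fun ⟨⟨⟨_, hTc⟩, hTL⟩, hTU⟩ => ⟨⟨hTU, hTL⟩, hTc⟩⟩
  · rw [mem_filter, mem_addrComplex_G, subset_sup_addrComplex_C, hF.mem_polyAt hi]
    constructor
    · rintro ⟨⟨⟨hT, h⟩, hTU⟩, -, hTL⟩
      exact ⟨⟨hT, (agrees_restrictA_iff (hF.mem_cross.1 hT).2.2 hL).2 ⟨hTL, h⟩⟩, hTU⟩
    · rintro ⟨⟨hT, h⟩, hTU⟩
      obtain ⟨hTL, h⟩ := (agrees_restrictA_iff (hF.mem_cross.1 hT).2.2 hL).1 h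
      exact ⟨⟨⟨hT, h⟩, hTU⟩, hTU, hTL⟩

lemma IsLabeled.regPairC_addrComplex (hF : F.IsLabeled k a) (hU : U ⊆ F.gnd)
    (hσ : univ.image σ = x.1) (hi : 1 ≤ i) (hL : #(L.image σ) = i + 1) (hε : ε ≤ ε')
    (hreg : F.RegAt i ε d (restrictA x i (L.image σ))
      (F.partAt (i + 1) (restrictA x i (L.image σ)) (x.2 (L.image σ))))
    (hcard : ε * (#(F.cliques i (restrictA x i (L.image σ))) : ℝ) ≤
      ε' * (#{S ∈ F.cliques i (restrictA x i (L.image σ)) | S ⊆ U} : ℝ)) :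
    RegPairC (F.addrComplex U x σ).gnd ((F.addrComplex U x σ).cross (i + 1)) i ε' d
      ((F.addrComplex U x σ).G (i + 1)) ((F.addrComplex U x σ).restr i L) := by
  have hLx : L.image σ ⊆ x.1 := hσ ▸ image_subset_image (subset_univ L)
  have hgnd : ∀ T, T ⊆ (F.addrComplex U x σ).gnd → T ⊆ U := fun T hT =>
    ((subset_addrComplex_gnd hσ).1 hT).1
  have htrim : KsetC F.gnd (F.cross (i + 1)) i (i + 1) ((F.addrComplex U x σ).restr i L) =
      {S ∈ F.cliques i (restrictA x i (L.image σ)) | S ⊆ U} := by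
    rw [hF.addrComplex_restr hU hσ hi, KsetC_filter_subset hi (F.cross_subset_card _), cliques]
  have hsub : (F.addrComplex U x σ).restr i L ⊆ F.polyAt i (restrictA x i (L.image σ)) := by
    rw [hF.addrComplex_restr hU hσ hi]
    exact filter_subset _ _
  refine (hreg.mono_right hsub hε (by rw [htrim]; exact hcard)).congr (fun Q hQ => ?_)
    fun S hS => ?_
  · refine KsetC_eq_of_subset hi (F.cross_subset_card _)
      (fun S hS => mem_powersetCard.1 (mem_filter.1 hS).1) ((hgnd _ Subset.rfl).trans hU)
      (fun T hT => ?_) fun S hS => ?_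
    · have hT := hQ hT
      rw [hF.addrComplex_restr hU hσ hi, mem_filter, hF.mem_polyAt hi] at hT
      exact (subset_addrComplex_gnd hσ).2 ⟨hT.2, hT.1.2.1.trans hLx⟩
    · rw [hF.mem_addrComplex_cross hU hσ, and_iff_left hS]
  · rw [htrim, mem_filter] at hS
    rw [← hF.mem_polyAt_succ_iff hi hLx hL hS.1, mem_addrComplex_G, and_iff_left hS.2]

end AddrComplex

end LabFam

section Counting

lemma one_add_two_mul_add_two_pow_le {p l : ℕ} (hp : 2 ≤ p) (hpl : p ≤ l) :
    1 + 2 * p + 2 ^ p ≤ 4 ^ l := by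
  have hp2 : p < 2 ^ p := Nat.lt_two_pow_self
  have h4 : 2 ^ 2 ≤ 2 ^ p := Nat.pow_le_pow_right two_pos hp
  calc 1 + 2 * p + 2 ^ p ≤ 2 ^ p * 2 ^ p := by nlinarith
    _ = 4 ^ p := (mul_pow 2 2 p).symm
    _ ≤ 4 ^ l := Nat.pow_le_pow_right four_pos hpl

lemma mul_pow_le_mul_pow_div {t m n p l : ℕ} {ε e : ℝ} (ht : 2 ≤ t) (hp : 2 ≤ p) (hpl : p ≤ l)
    (hε : 0 ≤ ε) (he : ε * (t : ℝ) ^ (4 ^ l) ≤ e) (hn : n ≤ 2 * t * m) :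
    ε * (n : ℝ) ^ p ≤ e * ((m : ℝ) ^ p / (2 * (t : ℝ) ^ (2 ^ p))) := by
  have ht2 : (2 : ℝ) ≤ t := by exact_mod_cast ht
  have hntm : (n : ℝ) ≤ (t : ℝ) ^ 2 * m := calc
    (n : ℝ) ≤ 2 * t * m := by exact_mod_cast hn
    _ ≤ (t : ℝ) ^ 2 * m := by
      rw [sq]
      gcongr
  rw [mul_div_assoc', le_div_iff₀ (by positivity)]
  calc ε * (n : ℝ) ^ p * (2 * (t : ℝ) ^ (2 ^ p))
      ≤ ε * ((t : ℝ) ^ 2 * m) ^ p * (t * (t : ℝ) ^ (2 ^ p)) := by gcongr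
    _ = ε * (t : ℝ) ^ (1 + 2 * p + 2 ^ p) * (m : ℝ) ^ p := by ring
    _ ≤ ε * (t : ℝ) ^ (4 ^ l) * (m : ℝ) ^ p := by
      gcongr
      · linarith
      · exact one_add_two_mul_add_two_pow_le hp hpl
    _ ≤ e * (m : ℝ) ^ p := by gcongr

lemma one_div_pow_le_prod_choose {a : ℕ → ℕ} {t j : ℕ} (ht : 1 ≤ t)
    (ha : ∀ i, 2 ≤ i → i ≤ j → 1 ≤ a i ∧ a i ≤ t) :
    1 / (t : ℝ) ^ (2 ^ (j + 1)) ≤ ∏ i ∈ Icc 2 j, (1 / (a i : ℝ)) ^ ((j + 1).choose i) := by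
  have ht1 : (1 : ℝ) ≤ t := by exact_mod_cast ht
  have hchoose : ∑ i ∈ Icc 2 j, (j + 1).choose i ≤ 2 ^ (j + 1) := by
    rw [← Nat.sum_range_choose]
    refine sum_le_sum_of_subset fun i hi => ?_
    rw [mem_Icc] at hi
    exact mem_range.2 (by omega)
  calc 1 / (t : ℝ) ^ (2 ^ (j + 1)) = (1 / (t : ℝ)) ^ (2 ^ (j + 1)) := (one_div_pow _ _).symm
    _ ≤ (1 / (t : ℝ)) ^ ∑ i ∈ Icc 2 j, (j + 1).choose i :=
      pow_le_pow_of_le_one (by positivity) (div_le_one_of_le₀ ht1 (by positivity)) hchoose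
    _ = ∏ i ∈ Icc 2 j, (1 / (t : ℝ)) ^ ((j + 1).choose i) := (prod_pow_eq_pow_sum _ _ _).symm
    _ ≤ ∏ i ∈ Icc 2 j, (1 / (a i : ℝ)) ^ ((j + 1).choose i) := by
      refine prod_le_prod (fun i _ => by positivity) fun i hi => ?_
      obtain ⟨hai, hat⟩ := ha i (mem_Icc.1 hi).1 (mem_Icc.1 hi).2
      have : (0 : ℝ) < a i := by exact_mod_cast hai
      gcongr

lemma card_mul_card_le_of_pair_mem {α : Type*} [DecidableEq α] {s t : Finset α}
    {𝒜 : Finset (Finset α)} (hst : Disjoint s t) (h : ∀ u ∈ s, ∀ v ∈ t, {u, v} ∈ 𝒜) :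
    #s * #t ≤ #𝒜 := by
  rw [← card_product]
  refine card_le_card_of_injOn (fun p => {p.1, p.2})
    (fun p hp => h _ (mem_product.1 hp).1 _ (mem_product.1 hp).2) ?_
  rintro ⟨u, v⟩ hp ⟨u', v'⟩ hp' heq
  simp only [coe_product, Set.mem_prod, mem_coe] at hp hp'
  have hne : u ≠ v' ∧ v ≠ u' := ⟨fun huv => disjoint_left.1 hst hp.1 (huv ▸ hp'.2),
    fun hvu => disjoint_left.1 hst hp'.1 (hvu ▸ hp.2)⟩
  simp only [Finset.ext_iff, mem_insert, mem_singleton] at heq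
  exact Prod.ext (((heq u).1 (Or.inl rfl)).resolve_right hne.1)
    (((heq v).1 (Or.inr rfl)).resolve_left hne.2)

variable {eCL : ℝ → ℝ → ℕ → ℕ → ℝ} {mCL : ℝ → ℝ → ℕ → ℕ → ℕ}

lemma CountingProp.half_mul_le_card (hCL : CountingProp eCL mCL) {γ d₀ : ℝ} {k l m : ℕ}
    {V : Type} [DecidableEq V] {X : Cx V l} {d : ℕ → ℝ} (hγ : 0 < γ) (hγ2 : γ ≤ 1 / 2)
    (hd₀ : 0 < d₀) (hk : 2 ≤ k) (hkl : k ≤ l) (hm : mCL γ d₀ k l ≤ m)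
    (hd : ∀ j, 2 ≤ j → j ≤ k → d₀ ≤ d j) (hX : X.IsComplex k) (hC : ∀ i, #(X.C i) = m)
    (hreg : X.IsRegular k (eCL γ d₀ k l) d) :
    1 / 2 * ((∏ j ∈ Icc 2 k, d j ^ l.choose j) * (m : ℝ) ^ l) ≤ #(Kset X.gnd k l (X.G k)) := by
  obtain ⟨⟨he, -⟩, hcount⟩ := hCL γ d₀ hγ hd₀ k l hk hkl
  have habs := hcount V X m 0 (eCL γ d₀ k l) d le_rfl (by norm_num) he le_rfl hm hd hX
    (fun i => by simp [hC i]) hreg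
  simp only [hC, prod_const, card_univ, Fintype.card_fin] at habs
  have hpos : 0 ≤ (∏ j ∈ Icc 2 k, d j ^ l.choose j) * (m : ℝ) ^ l := by
    refine mul_nonneg (prod_nonneg fun j hj => pow_nonneg (hd₀.le.trans ?_) _) (by positivity)
    exact hd j (mem_Icc.1 hj).1 (mem_Icc.1 hj).2
  have hγm := mul_le_mul_of_nonneg_right hγ2 hpos
  linarith [(abs_le.1 habs).1]

end Counting

namespace LabFam

section CliqueCount

variable {V : Type*} [DecidableEq V] {F : LabFam V} {k i j l m : ℕ} {a : ℕ → ℕ} {x : Addr}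
  {U S : Finset V} {ε e : ℝ}

lemma card_cliques_le (F : LabFam V) (hi : 1 ≤ i) (x : Addr) :
    #(F.cliques i x) ≤ #F.gnd ^ (i + 1) := by
  have hsub : F.cliques i x ⊆ F.gnd.powersetCard (i + 1) := fun S hS => by
    obtain ⟨hSg, hSc, -⟩ := (mem_KsetC_iff hi (F.cross_subset_card _)).1 hS
    exact mem_powersetCard.2 ⟨hSg, hSc⟩
  exact (card_le_card hsub).trans (card_powersetCard _ _ ▸ Nat.choose_le_pow _ _)

lemma IsLabeled.sq_le_card_cliques (hF : F.IsLabeled k a) (hU : U ⊆ F.gnd)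
    (hUm : ∀ b, 1 ≤ b → b ≤ a 1 → #{v ∈ U | F.vIdx v = b} = m) (hx : IsAddress 2 1 a x) :
    m ^ 2 ≤ #{S ∈ F.cliques 1 x | S ⊆ U} := by
  obtain ⟨b, c, hbc, hxbc⟩ := card_eq_two.1 hx.1
  have hb := hx.2.1 b (by simp [hxbc])
  have hc := hx.2.1 c (by simp [hxbc])
  calc m ^ 2 = #{v ∈ U | F.vIdx v = b} * #{v ∈ U | F.vIdx v = c} := by
        rw [hUm b hb.1 hb.2, hUm c hc.1 hc.2, sq]
    _ ≤ #{S ∈ F.cliques 1 x | S ⊆ U} := ?_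
  refine card_mul_card_le_of_pair_mem (disjoint_filter.2 fun v _ hvb hvc => hbc (hvb ▸ hvc)) ?_
  intro u hu v hv
  obtain ⟨huU, rfl⟩ := mem_filter.1 hu
  obtain ⟨hvU, rfl⟩ := mem_filter.1 hv
  have huvU : {u, v} ⊆ U := insert_subset huU (singleton_subset_iff.2 hvU)
  rw [mem_filter, hF.mem_cliques le_rfl, hF.mem_cross, agrees_one_iff]
  refine ⟨⟨⟨huvU.trans hU, card_pair (ne_of_apply_ne _ hbc), ?_⟩, ?_⟩, huvU⟩
  · rw [coe_pair, Set.injOn_pair]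
    exact fun h => absurd h hbc
  · rw [image_insert, image_singleton, hxbc]

lemma IsLabeled.isRegular_addrComplex (hF : F.IsLabeled k a) (hU : U ⊆ F.gnd)
    (hreg : F.PolyadReg k a ε) (hε : 0 ≤ ε) (hεe : ε ≤ e) (hj : j ≤ k - 1)
    (hx : IsAddress l j a x) {σ : Fin l → ℕ} (hσ : univ.image σ = x.1)
    (hinj : Function.Injective σ)
    (hlow : ∀ i, 1 ≤ i → i < j → ∀ y, IsAddress (i + 1) i a y →
      ε * (#F.gnd : ℝ) ^ (i + 1) ≤ e * (#{S ∈ F.cliques i y | S ⊆ U} : ℝ)) :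
    (F.addrComplex U x σ).IsRegular j e fun i => 1 / (a i : ℝ) := by
  intro p hp hpj L hL
  obtain ⟨i, rfl⟩ := Nat.exists_eq_add_of_le' (show 1 ≤ p by omega)
  have hLc : #(L.image σ) = i + 1 := by
    rw [card_image_of_injective _ hinj, (mem_powersetCard.1 hL).2]
  have hLx : L.image σ ⊆ x.1 := hσ ▸ image_subset_image (subset_univ L)
  have hy : IsAddress (i + 1) i a (restrictA x i (L.image σ)) :=
    hLc ▸ isAddress_restrictA hx (by omega) hLx
  obtain ⟨hb, hba⟩ := hx.2.2.1 _ hLx (by omega) (by omega)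
  refine hF.regPairC_addrComplex hU hσ (by omega) hLc hεe
    (hF.polyadReg_iff.1 hreg i (by omega) (by omega) _ hy _ hb (hLc ▸ hba)) ?_
  refine le_trans ?_ (hlow i (by omega) (by omega) _ hy)
  gcongr
  exact_mod_cast F.card_cliques_le (by omega) _

lemma Kset_addrComplex_subset (hj : 2 ≤ j) (hU : U ⊆ F.gnd) {σ : Fin l → ℕ}
    (hσ : univ.image σ = x.1) :
    Kset (F.addrComplex U x σ).gnd j (j + 1) ((F.addrComplex U x σ).G j) ⊆
      {S ∈ F.cliques j x | S ⊆ U} := by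
  intro S hS
  obtain ⟨hS, hSG⟩ := mem_filter.1 hS
  obtain ⟨hSX, hSc⟩ := mem_powersetCard.1 hS
  have hSU : S ⊆ U := ((subset_addrComplex_gnd hσ).1 hSX).1
  rw [mem_filter, cliques, mem_KsetC_iff (by omega) (F.cross_subset_card _)]
  exact ⟨⟨hSU.trans hU, hSc, fun T hT hTc =>
    (mem_addrComplex_G.1 (hSG T (mem_powersetCard.2 ⟨hT, hTc⟩))).1, by omega⟩, hSU⟩

end CliqueCount

section CountingLemma

variable {V : Type} [DecidableEq V] {F : LabFam V} {k j t m : ℕ} {a : ℕ → ℕ} {x : Addr}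
  {U : Finset V} {ε : ℝ} {eCL : ℝ → ℝ → ℕ → ℕ → ℝ} {mCL : ℝ → ℝ → ℕ → ℕ → ℕ}

lemma IsLabeled.card_cliques_ge_of_lower (hF : F.IsLabeled k a) (hU : U ⊆ F.gnd)
    (hUm : ∀ b, 1 ≤ b → b ≤ a 1 → #{v ∈ U | F.vIdx v = b} = m) (hCL : CountingProp eCL mCL)
    (hreg : F.PolyadReg k a ε) (hε : 0 ≤ ε) (ht : 2 ≤ t) (hn : #F.gnd ≤ 2 * t * m) (hj : 2 ≤ j)
    (hjk : j + 1 ≤ k) (ha : ∀ i, 2 ≤ i → i ≤ j → 1 ≤ a i ∧ a i ≤ t)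
    (hmCL : mCL (1 / t) (1 / t) j (j + 1) ≤ m)
    (heCL : ε * (t : ℝ) ^ (4 ^ (j + 1)) ≤ eCL (1 / t) (1 / t) j (j + 1))
    (hlow : ∀ i, 1 ≤ i → i < j → ∀ y, IsAddress (i + 1) i a y →
      (m : ℝ) ^ (i + 1) / (2 * (t : ℝ) ^ (2 ^ (i + 1))) ≤ #{S ∈ F.cliques i y | S ⊆ U})
    (hx : IsAddress (j + 1) j a x) :
    (m : ℝ) ^ (j + 1) / (2 * (t : ℝ) ^ (2 ^ (j + 1))) ≤ #{S ∈ F.cliques j x | S ⊆ U} := by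
  have ht2 : (2 : ℝ) ≤ t := by exact_mod_cast ht
  have htpos : (0 : ℝ) < 1 / t := by positivity
  set e := eCL (1 / t) (1 / t) j (j + 1)
  have he : 0 < e := (hCL _ _ htpos htpos j (j + 1) hj (by omega)).1.1
  have hεe : ε ≤ e := (le_mul_of_one_le_right hε (one_le_pow₀ (by linarith))).trans heCL
  have hσ : univ.image (x.1.orderEmbOfFin hx.1) = x.1 := image_orderEmbOfFin_univ _ _
  have hinj : Function.Injective (x.1.orderEmbOfFin hx.1) := (x.1.orderEmbOfFin hx.1).injective
  have hC : ∀ i, #((F.addrComplex U x (x.1.orderEmbOfFin hx.1)).C i) = m := fun i => by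
    obtain ⟨hb, hba⟩ := hx.2.1 _ (x.1.orderEmbOfFin_mem hx.1 i)
    exact hUm _ hb hba
  have hd : ∀ i, 2 ≤ i → i ≤ j → 1 / (t : ℝ) ≤ 1 / (a i : ℝ) := fun i hi hij => by
    obtain ⟨hai, hat⟩ := ha i hi hij
    have : (0 : ℝ) < a i := by exact_mod_cast hai
    gcongr
  have hXreg := hF.isRegular_addrComplex hU hreg hε hεe (by omega) hx hσ hinj fun i hi hij y hy =>
    (mul_pow_le_mul_pow_div ht (by omega) (by omega) hε heCL hn).trans
      (mul_le_mul_of_nonneg_left (hlow i hi hij y hy) he.le)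
  calc (m : ℝ) ^ (j + 1) / (2 * (t : ℝ) ^ (2 ^ (j + 1)))
      = 1 / 2 * (1 / (t : ℝ) ^ (2 ^ (j + 1)) * (m : ℝ) ^ (j + 1)) := by field_simp
    _ ≤ 1 / 2 * ((∏ i ∈ Icc 2 j, (1 / (a i : ℝ)) ^ (j + 1).choose i) * (m : ℝ) ^ (j + 1)) := by
      gcongr
      exact one_div_pow_le_prod_choose (by omega) ha
    _ ≤ _ := hCL.half_mul_le_card htpos (one_div_le_one_div_of_le two_pos ht2) htpos hj
      (by omega) hmCL hd (hF.isComplex_addrComplex hU hσ hinj) hC hXreg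
    _ ≤ _ := by
      exact_mod_cast card_le_card (Kset_addrComplex_subset hj hU hσ)

lemma IsLabeled.card_cliques_ge (hF : F.IsLabeled k a) (hU : U ⊆ F.gnd)
    (hUm : ∀ b, 1 ≤ b → b ≤ a 1 → #{v ∈ U | F.vIdx v = b} = m) (hCL : CountingProp eCL mCL)
    (hreg : F.PolyadReg k a ε) (hε : 0 ≤ ε) (ht : 2 ≤ t) (hn : #F.gnd ≤ 2 * t * m)
    (ha : ∀ i, 2 ≤ i → i ≤ k - 1 → 1 ≤ a i ∧ a i ≤ t)
    (hmCL : ∀ j, 2 ≤ j → j + 1 ≤ k → mCL (1 / t) (1 / t) j (j + 1) ≤ m)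
    (heCL : ∀ j, 2 ≤ j → j + 1 ≤ k →
      ε * (t : ℝ) ^ (4 ^ (j + 1)) ≤ eCL (1 / t) (1 / t) j (j + 1))
    (hj : 1 ≤ j) (hjk : j + 1 ≤ k) (hx : IsAddress (j + 1) j a x) :
    (m : ℝ) ^ (j + 1) / (2 * (t : ℝ) ^ (2 ^ (j + 1))) ≤ #{S ∈ F.cliques j x | S ⊆ U} := by
  induction j using Nat.strong_induction_on generalizing x with
  | _ j ih =>
    rcases hj.lt_or_eq' with hj2 | rfl
    · exact hF.card_cliques_ge_of_lower hU hUm hCL hreg hε ht hn hj2 hjk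
        (fun i hi hij => ha i hi (by omega)) (hmCL j hj2 hjk) (heCL j hj2 hjk)
        (fun i hi hij y hy => ih i hij hi (by omega) hy) hx
    · have ht1 : (1 : ℝ) ≤ (t : ℝ) ^ 2 ^ 2 := one_le_pow₀ (by exact_mod_cast (by omega : 1 ≤ t))
      calc (m : ℝ) ^ (1 + 1) / (2 * (t : ℝ) ^ (2 ^ (1 + 1))) ≤ (m : ℝ) ^ 2 :=
            div_le_self (by positivity) (by linarith)
        _ ≤ _ := by exact_mod_cast hF.sq_le_card_cliques hU hUm hx

end CountingLemma

end LabFam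

section CliqueDensity

lemma GoodERI.exists_counting_bounds {eRI : ℕ → ℕ → ℝ} (hERI : GoodERI eRI) (k : ℕ) {ε : ℝ}
    (hε : 0 < ε) :
    ∃ (T M : ℕ) (eCL : ℝ → ℝ → ℕ → ℕ → ℝ) (mCL : ℝ → ℝ → ℕ → ℕ → ℕ),
      CountingProp eCL mCL ∧ ∀ t : ℕ, 1 ≤ t → ε / 3 ≤ eRI t k → t ≤ T ∧
        ∀ j, 2 ≤ j → j + 1 ≤ k → mCL (1 / (t : ℝ)) (1 / (t : ℝ)) j (j + 1) ≤ M ∧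
          ε * (t : ℝ) ^ (4 ^ (j + 1)) ≤ eCL (1 / (t : ℝ)) (1 / (t : ℝ)) j (j + 1) := by
  obtain ⟨-, -, hanti, htend, eCL, mCL, hCL, hlt⟩ := hERI
  obtain ⟨T, hT⟩ := Filter.eventually_atTop.1
    ((htend k).eventually_lt_const (show (0 : ℝ) < ε / 3 by positivity))
  set threshold : ℕ × ℕ → ℕ := fun p => mCL (1 / (p.1 : ℝ)) (1 / (p.1 : ℝ)) p.2 (p.2 + 1)
  refine ⟨T, (Iic T ×ˢ Iic k).sup threshold, eCL, mCL, hCL, fun t ht hεt => ?_⟩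
  have htT : t ≤ T := not_lt.1 fun h => (hT t h.le).not_ge hεt
  refine ⟨htT, fun j hj hjk => ⟨?_, ?_⟩⟩
  · exact le_sup (f := threshold) (b := (t, j))
      (mem_product.2 ⟨mem_Iic.2 htT, mem_Iic.2 (by omega)⟩)
  · have : (0 : ℝ) < t := by exact_mod_cast ht
    have hpos : 0 < eCL (1 / (t : ℝ)) (1 / (t : ℝ)) j (j + 1) :=
      (hCL _ _ (by positivity) (by positivity) j (j + 1) hj (by omega)).1.1
    have hsmall := (hεt.trans (hanti t (j + 1) k (by omega) hjk)).trans_lt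
      (hlt t (j + 1) ht (by omega))
    rw [lt_div_iff₀ (by positivity), Nat.add_sub_cancel] at hsmall
    linarith

lemma GoodERI.le_three {eRI : ℕ → ℕ → ℝ} (hERI : GoodERI eRI) {k : ℕ} {ε : ℝ} {a : ℕ → ℕ}
    {d : Addr → ℝ} (hRI : RegInstance eRI k (ε / 3) a d) : ε ≤ 3 := by
  obtain ⟨hk, ha, -, hεRI, -⟩ := hRI
  have hmax : 1 ≤ maxA k a :=
    (ha 1 le_rfl (by omega)).trans (le_sup (f := a) (mem_Icc.2 ⟨le_rfl, by omega⟩))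
  linarith [(hERI.1 _ _ hmax hk).2]

lemma pow_div_le_pow_div {n m t T p k : ℕ} (ht : 1 ≤ t) (htT : t ≤ T) (hn : n ≤ 2 * t * m)
    (hpk : p ≤ k) :
    1 / ((2 * (T : ℝ)) ^ k * (2 * (T : ℝ) ^ (2 ^ k))) * (n : ℝ) ^ p ≤
      (m : ℝ) ^ p / (2 * (t : ℝ) ^ (2 ^ p)) := by
  have ht1 : (1 : ℝ) ≤ t := by exact_mod_cast ht
  have htT' : (t : ℝ) ≤ T := by exact_mod_cast htT
  have hT1 : (1 : ℝ) ≤ T := ht1.trans htT'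
  have hnm : (n : ℝ) ≤ 2 * T * m := by
    exact_mod_cast hn.trans (Nat.mul_le_mul_right m (Nat.mul_le_mul_left 2 htT))
  have hnum : (n : ℝ) ^ p ≤ (2 * T) ^ k * (m : ℝ) ^ p := by
    calc (n : ℝ) ^ p ≤ (2 * T * m) ^ p := by gcongr
      _ = (2 * T) ^ p * (m : ℝ) ^ p := mul_pow _ _ _
      _ ≤ (2 * T) ^ k * (m : ℝ) ^ p := by gcongr; linarith
  have hden : (t : ℝ) ^ (2 ^ p) ≤ (T : ℝ) ^ (2 ^ k) := by
    calc (t : ℝ) ^ (2 ^ p) ≤ (T : ℝ) ^ (2 ^ p) := by gcongr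
      _ ≤ (T : ℝ) ^ (2 ^ k) := by gcongr; norm_num
  rw [one_div_mul_eq_div, div_le_div_iff₀ (by positivity) (by positivity)]
  calc (n : ℝ) ^ p * (2 * (t : ℝ) ^ (2 ^ p))
      ≤ ((2 * T) ^ k * (m : ℝ) ^ p) * (2 * (T : ℝ) ^ (2 ^ k)) := by gcongr
    _ = (m : ℝ) ^ p * ((2 * T) ^ k * (2 * (T : ℝ) ^ (2 ^ k))) := by ring

lemma exists_three_quarters_quotient {n M T r t : ℕ} (hr : 1 ≤ r) (hrt : r ≤ t) (hrT : r ≤ T)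
    (hn : 4 * T * (M + 2) ≤ n) :
    ∃ m, M ≤ m ∧ m * (4 * r) ≤ 3 * n ∧ n ≤ 2 * t * m := by
  set m := 3 * n / (4 * r)
  have hm : 3 * n < (m + 1) * (4 * r) := by
    rw [add_mul, one_mul]
    exact Nat.lt_div_mul_add (by omega)
  have hrn : 4 * r * (M + 2) ≤ n := (by gcongr : _ ≤ 4 * T * (M + 2)).trans hn
  refine ⟨m, ?_, Nat.div_mul_le_self _ _, ?_⟩
  · by_contra! h
    nlinarith
  · have hle : 2 * r * m ≤ 2 * t * m := by gcongr
    nlinarith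

lemma exists_subset_card_fiber_eq {V ι : Type*} [DecidableEq ι] {A : Finset V}
    {f : V → ι} {I : Finset ι} {m : ℕ} (hm : ∀ b ∈ I, m ≤ #{v ∈ A | f v = b}) :
    ∃ U ⊆ A, ∀ b ∈ I, #{v ∈ U | f v = b} = m := by
  choose! S hS hSm using fun b hb => exists_subset_card_eq (hm b hb)
  have hmem : ∀ {b v}, b ∈ I → v ∈ S b → v ∈ A ∧ f v = b := fun hb hv =>
    mem_filter.1 (hS _ hb hv)
  refine ⟨I.biUnion S, fun v hv => ?_, fun b hb => ?_⟩
  · obtain ⟨b, hb, hv⟩ := mem_biUnion.1 hv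
    exact (hmem hb hv).1
  · rw [← hSm b hb]
    congr 1
    ext v
    simp only [mem_filter, mem_biUnion]
    constructor
    · rintro ⟨⟨c, hc, hv⟩, rfl⟩
      rwa [(hmem hc hv).2]
    · exact fun hv => ⟨⟨b, hb, hv⟩, (hmem hb hv).2⟩

/-- The vertex-class condition in an `(η, ε, a, λ)`-equitable family of partitions: all classes
have size `(1 ± λ) n / a₁`. -/
def PartFam.ClassesBalanced {V : Type*} [DecidableEq V] (F : PartFam V) (a : ℕ → ℕ)
    (lam : ℝ) : Prop :=
  ∀ v ∈ F.gnd, |(#(F.vClass v) : ℝ) - (#F.gnd : ℝ) / (a 1 : ℝ)|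
    ≤ lam * (#F.gnd : ℝ) / (a 1 : ℝ)

namespace LabFam

lemma IsLabeled.le_card_vIdx_eq {V : Type*} [DecidableEq V] {F : LabFam V} {k : ℕ} {a : ℕ → ℕ}
    (hF : F.IsLabeled k a) {lam : ℝ} (hlam : lam ≤ 1 / 4) (hbal : F.ClassesBalanced a lam) {m : ℕ}
    (hm : m * (4 * a 1) ≤ 3 * #F.gnd) {b : ℕ} (hb : 1 ≤ b) (hba : b ≤ a 1) :
    m ≤ #{v ∈ F.gnd | F.vIdx v = b} := by
  obtain ⟨v, hv, rfl⟩ := hF.exists_vIdx_eq hb hba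
  have ha : (0 : ℝ) < a 1 := by exact_mod_cast (show 0 < a 1 by omega)
  have hlower := (abs_le.1 (hbal v hv)).1
  rw [hF.vClass_eq hv, mul_div_assoc] at hlower
  have hmR : (m : ℝ) ≤ 3 / 4 * (#F.gnd / a 1) := by
    have hm' : (m : ℝ) * (4 * a 1) ≤ 3 * #F.gnd := by exact_mod_cast hm
    rw [mul_div_assoc', le_div_iff₀ ha]
    linarith
  have hdev : lam * ((#F.gnd : ℝ) / a 1) ≤ 1 / 4 * (#F.gnd / a 1) := by gcongr
  exact_mod_cast (by linarith : (m : ℝ) ≤ #{u ∈ F.gnd | F.vIdx u = F.vIdx v})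

end LabFam

lemma GoodERI.exists_clique_density {eRI : ℕ → ℕ → ℝ} (hERI : GoodERI eRI) {k : ℕ}
    (hk : 2 ≤ k) {ε : ℝ} (hε : 0 < ε) :
    ∃ c > (0 : ℝ), ∃ T n₀ : ℕ, ∀ (V : Type) [DecidableEq V] (F : LabFam V) (a : ℕ → ℕ)
      (d : Addr → ℝ) (η lam : ℝ), lam ≤ 1 / 4 → RegInstance eRI k (ε / 3) a d →
      F.IsLabeled k a → F.IsEquitable k a η ε lam → n₀ ≤ #F.gnd →
      a 1 ≤ T ∧ ∀ j, 1 ≤ j → j + 1 ≤ k → ∀ x, IsAddress (j + 1) j a x →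
        c * (#F.gnd : ℝ) ^ (j + 1) ≤ #(F.cliques j x) := by
  obtain ⟨T, M, eCL, mCL, hCL, hbounds⟩ := hERI.exists_counting_bounds k hε
  refine ⟨1 / ((2 * ((T + 1 : ℕ) : ℝ)) ^ k * (2 * ((T + 1 : ℕ) : ℝ) ^ (2 ^ k))), by positivity,
    T + 1, 4 * (T + 1) * (M + 2), ?_⟩
  rintro V _ F a d η lam hlam ⟨-, ha, -, hεRI, -⟩ hF ⟨-, hbal, hreg⟩ hn
  have hat : ∀ i, 1 ≤ i → i ≤ k - 1 → a i ≤ maxA k a := fun i h1 hik =>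
    le_sup (mem_Icc.2 ⟨h1, hik⟩)
  have hka : k ≤ a 1 := hF.1.2.2.2.2.1
  have hat1 : a 1 ≤ maxA k a := hat 1 le_rfl (by omega)
  obtain ⟨htT, hparam⟩ := hbounds (maxA k a) (by omega) hεRI
  obtain ⟨m, hMm, hm, hnm⟩ := exists_three_quarters_quotient (t := maxA k a)
    (by omega : 1 ≤ a 1) hat1 (by omega : a 1 ≤ T + 1) hn
  obtain ⟨U, hU, hUm⟩ := exists_subset_card_fiber_eq (I := Icc 1 (a 1)) fun b hb =>
    hF.le_card_vIdx_eq hlam hbal hm (mem_Icc.1 hb).1 (mem_Icc.1 hb).2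
  refine ⟨by omega, fun j hj hjk x hx => ?_⟩
  calc _ ≤ (m : ℝ) ^ (j + 1) / (2 * (maxA k a : ℝ) ^ (2 ^ (j + 1))) :=
        pow_div_le_pow_div (by omega) (by omega) hnm hjk
    _ ≤ #{S ∈ F.cliques j x | S ⊆ U} :=
        hF.card_cliques_ge hU (fun b hb hba => hUm b (mem_Icc.2 ⟨hb, hba⟩)) hCL hreg hε.le
          (by omega) hnm (fun i hi hik => ⟨ha i (by omega) hik, hat i (by omega) hik⟩)
          (fun j hj hjk => (hparam j hj hjk).1.trans hMm) (fun j hj hjk => (hparam j hj hjk).2)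
          hj hjk hx
    _ ≤ #(F.cliques j x) := by gcongr; exact filter_subset _ _

end CliqueDensity

section Perturbation

lemma sd_comm {V : Type*} [DecidableEq V] (A B : Finset (Finset V)) : sd A B = sd B A :=
  union_comm _ _

lemma notMem_sd {V : Type*} [DecidableEq V] {A B : Finset (Finset V)} {S : Finset V} :
    S ∉ sd A B ↔ (S ∈ A ↔ S ∈ B) := by
  simp only [sd, mem_union, mem_sdiff]
  tauto

lemma abs_card_sub_card_le {α : Type*} {X Y Z : Finset α}
    (h : ∀ S ∉ Z, S ∈ X ↔ S ∈ Y) : |(#X : ℝ) - #Y| ≤ #Z := by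
  have hle : ∀ {X Y : Finset α}, (∀ S ∉ Z, S ∈ X → S ∈ Y) → (#X : ℝ) ≤ #Y + #Z := fun h => by
    refine mod_cast (card_le_card fun S hS => mem_union.2 ?_).trans (card_union_le _ _)
    exact (em (S ∈ Z)).symm.imp (h S · hS) id
  rw [abs_sub_le_iff]
  constructor <;> linarith [hle fun S hS => (h S hS).1, hle fun S hS => (h S hS).2]

-- Since `ε + δ ≤ 4`, the hypothesis `5 e ≤ δ N` absorbs the loss in passing from `N'` to `N`;
-- the remaining errors add up to `5 e + f`.
lemma abs_sub_mul_le_of_close {N N' q q' α α' ε δ d e f : ℝ} (hε : 0 ≤ ε) (hε3 : ε ≤ 3)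
    (hδ : 0 ≤ δ) (hδ1 : δ ≤ 1) (hd : 0 ≤ d) (hd1 : d ≤ 1) (hN : |N - N'| ≤ e)
    (hq : |q - q'| ≤ e) (hα : |α - α'| ≤ e + f) (hreg : ε * N ≤ q → |α - d * q| ≤ ε * q)
    (hq' : (ε + δ) * N' ≤ q') (heN : 5 * e ≤ δ * N) (hefN : 5 * e + f ≤ δ * (ε * N)) :
    |α' - d * q'| ≤ (ε + δ) * q' := by
  have he : 0 ≤ e := (abs_nonneg _).trans hN
  have hεN : ε * N + e ≤ q' := by
    calc ε * N + e ≤ (ε + δ) * N - 4 * e := by linarith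
      _ ≤ (ε + δ) * N - (ε + δ) * e := by gcongr; linarith
      _ = (ε + δ) * (N - e) := by ring
      _ ≤ (ε + δ) * N' := by gcongr; linarith [(abs_le.1 hN).2]
      _ ≤ q' := hq'
  have hqq' : q ≤ q' + e := by linarith [(abs_le.1 hq).2]
  have hα_reg : |α - d * q| ≤ ε * q' + 3 * e := by
    calc |α - d * q| ≤ ε * q := hreg (by linarith [(abs_le.1 hq).1])
      _ ≤ ε * (q' + e) := by gcongr
      _ = ε * q' + ε * e := by ring
      _ ≤ ε * q' + 3 * e := by gcongr
  have hdq : |d * (q - q')| ≤ e := by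
    calc |d * (q - q')| = d * |q - q'| := by rw [abs_mul, abs_of_nonneg hd]
      _ ≤ 1 * e := by gcongr
      _ = e := one_mul e
  calc |α' - d * q'| = |-(α - α') + (α - d * q) + d * (q - q')| := by congr 1; ring
    _ ≤ |α - α'| + |α - d * q| + |d * (q - q')| := by
        simpa only [abs_neg] using abs_add_three (-(α - α')) (α - d * q) (d * (q - q'))
    _ ≤ (e + f) + (ε * q' + 3 * e) + e := by gcongr
    _ = ε * q' + (5 * e + f) := by ring
    _ ≤ ε * q' + δ * (ε * N) := by gcongr
    _ ≤ ε * q' + δ * q' := by gcongr; linarith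
    _ = (ε + δ) * q' := by ring

variable {V : Type*} [DecidableEq V] {W : Finset V} {j : ℕ}
  {cr cr' A A' B B' D R : Finset (Finset V)}

/-- The sets obtained from a member of `D` by adding a vertex of `W`. -/
def extensions (D : Finset (Finset V)) (W : Finset V) : Finset (Finset V) :=
  (D ×ˢ W).image fun p => insert p.2 p.1

lemma card_extensions_le (D : Finset (Finset V)) (W : Finset V) :
    #(extensions D W) ≤ #D * #W :=
  card_image_le.trans (card_product D W).le

lemma notMem_of_notMem_extensions {S T : Finset V} (hS : S ∉ extensions D W) (hSW : S ⊆ W)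
    (hTS : T ⊆ S) (hcard : #S = #T + 1) : T ∉ D := fun hTD => by
  obtain ⟨v, -, rfl⟩ := (covBy_iff_exists_insert.1 (covBy_iff_card_sdiff_eq_one.2
    ⟨hTS, by rw [card_sdiff_of_subset hTS]; omega⟩))
  exact hS (mem_image.2 ⟨(T, v), mem_product.2 ⟨hTD, hSW (mem_insert_self v T)⟩, rfl⟩)

/-- The `j`-graphs `B` and `B'` agree outside `D`. At level `1` cliques are also required to be
crossing, so there the families `cr` and `cr'` of crossing pairs have to agree as well. -/
structure AgreeOutside (W : Finset V) (j : ℕ) (D cr cr' B B' : Finset (Finset V)) : Prop where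
  mem_iff : ∀ T ∉ D, T ∈ B ↔ T ∈ B'
  cross_iff : j = 1 → ∀ S ⊆ W, (∀ T ⊆ S, #T = j → T ∉ D ∧ T ∈ B) → (S ∈ cr ↔ S ∈ cr')

lemma AgreeOutside.mem_KsetC_iff (h : AgreeOutside W j D cr cr' B B') (hj : 1 ≤ j)
    (hcr : ∀ S ∈ cr, S ⊆ W ∧ #S = j + 1) (hcr' : ∀ S ∈ cr', S ⊆ W ∧ #S = j + 1)
    {S : Finset V} (hS : S ∉ extensions D W) (hR : R ⊆ B') :
    S ∈ KsetC W cr j (j + 1) (R ∩ B) ↔ S ∈ KsetC W cr' j (j + 1) R := by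
  rw [HypReg.mem_KsetC_iff hj hcr, HypReg.mem_KsetC_iff hj hcr']
  refine and_congr_right fun hSW => and_congr_right fun hSc => ?_
  have hclean : ∀ T ⊆ S, #T = j → T ∉ D := fun T hT hTc =>
    notMem_of_notMem_extensions hS hSW hT (by omega)
  have hRB : (∀ T ⊆ S, #T = j → T ∈ R ∩ B) ↔ ∀ T ⊆ S, #T = j → T ∈ R :=
    forall₃_congr fun T hT hTc => mem_inter.trans <| and_iff_left_of_imp fun hTR =>
      (h.mem_iff T (hclean T hT hTc)).2 (hR hTR)
  rw [← hRB]
  exact and_congr_right fun hSR => forall_congr' fun hj1 => h.cross_iff hj1 S hSW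
    fun T hT hTc => ⟨hclean T hT hTc, (mem_inter.1 (hSR T hT hTc)).2⟩

lemma AgreeOutside.mem_KsetC_inter_iff (h : AgreeOutside W j D cr cr' B B') (hj : 1 ≤ j)
    (hcr : ∀ S ∈ cr, S ⊆ W ∧ #S = j + 1) {S : Finset V} (hS : S ∉ extensions D W) :
    S ∈ KsetC W cr j (j + 1) B ↔ S ∈ KsetC W cr j (j + 1) (B' ∩ B) := by
  rw [HypReg.mem_KsetC_iff hj hcr, HypReg.mem_KsetC_iff hj hcr]
  refine and_congr_right fun hSW => and_congr_right fun hSc => and_congr_left fun _ => ?_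
  refine forall₃_congr fun T hT hTc => (mem_inter.trans (and_iff_right_of_imp ?_)).symm
  exact (h.mem_iff T (notMem_of_notMem_extensions hS hSW hT (by omega))).1

lemma RegPairC.perturb {ε δ d : ℝ} (hr : RegPairC W cr j ε d A B)
    (h : AgreeOutside W j D cr cr' B B') (hj : 1 ≤ j)
    (hcr : ∀ S ∈ cr, S ⊆ W ∧ #S = j + 1) (hcr' : ∀ S ∈ cr', S ⊆ W ∧ #S = j + 1)
    (hε : 0 ≤ ε) (hε3 : ε ≤ 3) (hδ : 0 ≤ δ) (hδ1 : δ ≤ 1) (hd : 0 ≤ d) (hd1 : d ≤ 1)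
    (hD : 5 * ((#D : ℝ) * #W) ≤ δ * #(KsetC W cr j (j + 1) B))
    (hDA : 5 * ((#D : ℝ) * #W) + #(sd A A') ≤ δ * (ε * #(KsetC W cr j (j + 1) B))) :
    RegPairC W cr' j (ε + δ) d A' B' := by
  intro R hR hRcard
  have hext : (#(extensions D W) : ℝ) ≤ #D * #W := by exact_mod_cast card_extensions_le D W
  have hcliques : ∀ {R}, R ⊆ B' → ∀ S ∉ extensions D W,
      S ∈ KsetC W cr j (j + 1) (R ∩ B) ↔ S ∈ KsetC W cr' j (j + 1) R := fun hR S hS =>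
    h.mem_KsetC_iff hj hcr hcr' hS hR
  have hN : |(#(KsetC W cr j (j + 1) B) : ℝ) - #(KsetC W cr' j (j + 1) B')| ≤ #D * #W :=
    (abs_card_sub_card_le fun S hS => (h.mem_KsetC_inter_iff hj hcr hS).trans
      (hcliques Subset.rfl S hS)).trans hext
  have hedges : ∀ S ∉ extensions D W ∪ sd A A',
      S ∈ A ∩ KsetC W cr j (j + 1) (R ∩ B) ↔ S ∈ A' ∩ KsetC W cr' j (j + 1) R := by
    intro S hS
    rw [notMem_union] at hS
    rw [mem_inter, mem_inter, hcliques hR S hS.1, notMem_sd.1 hS.2]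
  refine abs_sub_mul_le_of_close hε hε3 hδ hδ1 hd hd1 hN
    ((abs_card_sub_card_le (hcliques hR)).trans hext)
    ((abs_card_sub_card_le hedges).trans ?_) (hr (R ∩ B) inter_subset_right) hRcard hD hDA
  calc (#(extensions D W ∪ sd A A') : ℝ) ≤ #(extensions D W) + #(sd A A') := by
        exact_mod_cast card_union_le _ _
    _ ≤ #D * #W + #(sd A A') := by gcongr

end Perturbation

namespace LabFam

section PerturbedPolyads

variable {V : Type*} [DecidableEq V] {P Q F : LabFam V} {k j : ℕ} {a : ℕ → ℕ}
  {x : Addr} {ν : ℝ}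

/-- The label at base `B` of the address `x`. At a singleton base this is the class index itself,
which an address does not record in its labelling; with this convention the polyads of level `1`
and of higher levels obey the same formula. -/
def topLabel (x : Addr) (B : Finset ℕ) : ℕ :=
  if #B = 1 then B.sup id else x.2 B

/-- The `j`-sets on which the polyads of `P` and `Q` at the address `x` may differ: those lying in
the symmetric difference of two corresponding parts below `x`. -/
noncomputable def exceptional (P Q : LabFam V) (j : ℕ) (x : Addr) : Finset (Finset V) :=
  (x.1.powersetCard j).biUnion fun B =>
    sd (P.partAt j (restrictA x (j - 1) B) (topLabel x B))
      (Q.partAt j (restrictA x (j - 1) B) (topLabel x B))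

lemma partAt_one {b : ℕ} (hx : x.1 = {b}) : F.partAt 1 x b = sing {v ∈ F.gnd | F.vIdx v = b} := by
  rw [partAt, if_pos le_rfl, if_pos hx]

lemma partAt_one_restrictA (x : Addr) (b : ℕ) :
    F.partAt 1 (restrictA x 0 {b}) (topLabel x {b}) = sing {v ∈ F.gnd | F.vIdx v = b} := by
  rw [topLabel, if_pos (card_singleton b), sup_singleton, id, partAt_one rfl]

lemma mem_polyAt_iff_exists_partAt (hj : 1 ≤ j) {S : Finset V} :
    S ∈ F.polyAt j x ↔
      ∃ B ∈ x.1.powersetCard j, S ∈ F.partAt j (restrictA x (j - 1) B) (topLabel x B) := by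
  rcases hj.eq_or_lt with rfl | hj2
  · simp only [polyAt, if_pos, powersetCard_one, mem_map, Function.Embedding.coeFn_mk,
      exists_exists_and_eq_and, Nat.sub_self, partAt_one_restrictA, sing, mem_image, mem_filter]
    constructor
    · rintro ⟨v, ⟨hv, hvx⟩, rfl⟩
      exact ⟨F.vIdx v, hvx, v, ⟨hv, rfl⟩, rfl⟩
    · rintro ⟨b, hb, v, ⟨hv, rfl⟩, rfl⟩
      exact ⟨v, ⟨hv, hb⟩, rfl⟩
  · rw [polyAt, if_neg hj2.ne', mem_sup]
    refine exists_congr fun B => and_congr_right fun hB => ?_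
    rw [topLabel, if_neg (by rw [(mem_powersetCard.1 hB).2]; omega)]

lemma topLabel_mem_Icc (hx : IsAddress (j + 1) j a x) {B : Finset ℕ}
    (hB : B ∈ x.1.powersetCard j) (hj : 1 ≤ j) : topLabel x B ∈ Icc 1 (a j) := by
  obtain ⟨hBx, rfl⟩ := mem_powersetCard.1 hB
  rw [topLabel, mem_Icc]
  split_ifs with hB1
  · obtain ⟨b, rfl⟩ := card_eq_one.1 hB1
    simpa using hx.2.1 b (singleton_subset_iff.1 hBx)
  · exact hx.2.2.1 B hBx (by omega) le_rfl

/-- The closeness assumption of the theorem at one level: corresponding parts of `P` and `Q`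
differ in at most `ν * C(n, j)` of the `j`-sets. -/
def PartsClose (P Q : LabFam V) (a : ℕ → ℕ) (ν : ℝ) (j : ℕ) : Prop :=
  ∀ (x : Addr) (b : ℕ), IsAddress j (j - 1) a x → 1 ≤ b → b ≤ a j →
    (#(sd (P.partAt j x b) (Q.partAt j x b)) : ℝ) ≤ ν * ((#P.gnd).choose j : ℝ)

lemma PartsClose.card_exceptional_le (hPQ : PartsClose P Q a ν j) (hν : 0 ≤ ν) (hj : 1 ≤ j)
    (hx : IsAddress (j + 1) j a x) :
    (#(exceptional P Q j x) : ℝ) ≤ (j + 1) * (ν * (#P.gnd : ℝ) ^ j) := by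
  have hpart : ∀ B ∈ x.1.powersetCard j,
      (#(sd (P.partAt j (restrictA x (j - 1) B) (topLabel x B))
        (Q.partAt j (restrictA x (j - 1) B) (topLabel x B))) : ℝ) ≤ ν * (#P.gnd : ℝ) ^ j := by
    intro B hB
    obtain ⟨hBx, hBj⟩ := mem_powersetCard.1 hB
    obtain ⟨hlb, hub⟩ := mem_Icc.1 (topLabel_mem_Icc hx hB hj)
    have haddr := isAddress_restrictA hx (Nat.sub_le j 1) hBx
    rw [hBj] at haddr
    refine (hPQ _ _ haddr hlb hub).trans ?_
    gcongr
    exact_mod_cast Nat.choose_le_pow _ _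
  calc (#(exceptional P Q j x) : ℝ)
      ≤ ∑ B ∈ x.1.powersetCard j, (#(sd (P.partAt j (restrictA x (j - 1) B) (topLabel x B))
        (Q.partAt j (restrictA x (j - 1) B) (topLabel x B))) : ℝ) :=
        mod_cast card_biUnion_le
    _ ≤ #(x.1.powersetCard j) • (ν * (#P.gnd : ℝ) ^ j) := sum_le_card_nsmul _ _ _ hpart
    _ = (j + 1) * (ν * (#P.gnd : ℝ) ^ j) := by
        rw [card_powersetCard, hx.1, Nat.choose_succ_self_right, nsmul_eq_mul]
        push_cast
        ring

lemma mem_partAt_iff_of_notMem_exceptional {T : Finset V} (hT : T ∉ exceptional P Q j x)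
    {B : Finset ℕ} (hB : B ∈ x.1.powersetCard j) :
    T ∈ P.partAt j (restrictA x (j - 1) B) (topLabel x B) ↔
      T ∈ Q.partAt j (restrictA x (j - 1) B) (topLabel x B) :=
  notMem_sd.1 fun h => hT (mem_biUnion.2 ⟨B, hB, h⟩)

lemma vIdx_eq_of_notMem_exceptional {v : V} (hv : {v} ∉ exceptional P Q 1 x)
    (hvP : {v} ∈ P.polyAt 1 x) : Q.vIdx v = P.vIdx v := by
  obtain ⟨B, hB, hPB⟩ := (mem_polyAt_iff_exists_partAt le_rfl).1 hvP
  have hQB := (mem_partAt_iff_of_notMem_exceptional hv hB).1 hPB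
  obtain ⟨b, rfl⟩ := card_eq_one.1 (mem_powersetCard.1 hB).2
  rw [Nat.sub_self, partAt_one_restrictA, mem_sing, singleton_subset_iff, mem_filter] at hPB hQB
  exact hQB.1.2.trans hPB.1.2.symm

lemma IsLabeled.agreeOutside_exceptional (hP : P.IsLabeled k a) (hQ : Q.IsLabeled k a)
    (hgnd : Q.gnd = P.gnd) (hj : 1 ≤ j) (W : Finset V) :
    AgreeOutside W j (exceptional P Q j x) (P.cross (j + 1)) (Q.cross (j + 1))
      (P.polyAt j x) (Q.polyAt j x) where
  mem_iff T hT := by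
    rw [mem_polyAt_iff_exists_partAt hj, mem_polyAt_iff_exists_partAt hj]
    exact exists_congr fun B => and_congr_right fun hB =>
      mem_partAt_iff_of_notMem_exceptional hT hB
  cross_iff := by
    rintro rfl S - hS
    rw [hP.mem_cross, hQ.mem_cross, hgnd]
    refine and_congr_right fun _ => and_congr_right fun _ => ?_
    refine Set.EqOn.injOn_iff fun v hv => ?_
    obtain ⟨hvD, hvP⟩ := hS {v} (singleton_subset_iff.2 hv) (card_singleton v)
    exact (vIdx_eq_of_notMem_exceptional hvD hvP).symm

lemma RegAt.perturb {ε δ d c : ℝ} {A A' : Finset (Finset V)} (hr : P.RegAt j ε d x A)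
    (hP : P.IsLabeled k a) (hQ : Q.IsLabeled k a) (hgnd : Q.gnd = P.gnd)
    (hPQ : PartsClose P Q a ν j) (hj : 1 ≤ j) (hjk : j + 1 ≤ k) (hx : IsAddress (j + 1) j a x)
    (hA : (#(sd A A') : ℝ) ≤ ν * ((#P.gnd).choose (j + 1) : ℝ))
    (hcliques : c * (#P.gnd : ℝ) ^ (j + 1) ≤ #(P.cliques j x)) (hν : 0 ≤ ν)
    (hε : 0 ≤ ε) (hε3 : ε ≤ 3) (hδ : 0 ≤ δ) (hδ1 : δ ≤ 1) (hd : 0 ≤ d) (hd1 : d ≤ 1)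
    (hνc : (5 * k + 1) * ν ≤ δ * c) (hνεc : (5 * k + 1) * ν ≤ δ * (ε * c)) :
    Q.RegAt j (ε + δ) d x A' := by
  have hjk' : (j : ℝ) + 1 ≤ k := by exact_mod_cast hjk
  have hA' : (#(sd A A') : ℝ) ≤ ν * (#P.gnd : ℝ) ^ (j + 1) := hA.trans <|
    mul_le_mul_of_nonneg_left (mod_cast Nat.choose_le_pow _ _) hν
  set n : ℝ := (#P.gnd : ℝ)
  have hD : (#(exceptional P Q j x) : ℝ) * n ≤ k * (ν * n ^ (j + 1)) := by
    calc (#(exceptional P Q j x) : ℝ) * n ≤ (j + 1) * (ν * n ^ j) * n := by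
          gcongr; exact hPQ.card_exceptional_le hν hj hx
      _ ≤ k * (ν * n ^ j) * n := by gcongr
      _ = k * (ν * n ^ (j + 1)) := by ring
  rw [RegAt, hgnd]
  refine RegPairC.perturb hr (hP.agreeOutside_exceptional hQ hgnd hj P.gnd) hj
    (P.cross_subset_card _) (hgnd ▸ Q.cross_subset_card _) hε hε3 hδ hδ1 hd hd1 ?_ ?_
  · calc 5 * (#(exceptional P Q j x) * n) ≤ 5 * (k * (ν * n ^ (j + 1))) + ν * n ^ (j + 1) :=
          le_add_of_le_of_nonneg (by gcongr) (by positivity)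
      _ = (5 * k + 1) * ν * n ^ (j + 1) := by ring
      _ ≤ δ * c * n ^ (j + 1) := by gcongr
      _ = δ * (c * n ^ (j + 1)) := by ring
      _ ≤ δ * #(P.cliques j x) := by gcongr
  · calc 5 * (#(exceptional P Q j x) * n) + #(sd A A')
          ≤ 5 * (k * (ν * n ^ (j + 1))) + ν * n ^ (j + 1) := by gcongr
      _ = (5 * k + 1) * ν * n ^ (j + 1) := by ring
      _ ≤ δ * (ε * c) * n ^ (j + 1) := by gcongr
      _ = δ * (ε * (c * n ^ (j + 1))) := by ring
      _ ≤ δ * (ε * #(P.cliques j x)) := by gcongr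

lemma PartsClose.abs_card_vIdx_sub_le (hPQ : PartsClose P Q a ν 1) {b : ℕ} (hb : 1 ≤ b)
    (hba : b ≤ a 1) :
    |(#{v ∈ P.gnd | P.vIdx v = b} : ℝ) - #{v ∈ Q.gnd | Q.vIdx v = b}| ≤ ν * #P.gnd := by
  have haddr : IsAddress 1 0 a ({b}, fun _ => 0) :=
    ⟨card_singleton b, by simpa using ⟨hb, hba⟩, fun L _ hL2 hL0 => by omega, fun _ _ => rfl⟩
  have hsd := hPQ _ b haddr hb hba
  rw [partAt_one rfl, partAt_one rfl, Nat.choose_one_right] at hsd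
  rw [← card_sing, ← card_sing {v ∈ Q.gnd | Q.vIdx v = b}]
  exact (abs_card_sub_card_le fun S hS => notMem_sd.1 hS).trans hsd

lemma PartsClose.classesBalanced (hPQ : PartsClose P Q a ν 1) (hP : P.IsLabeled k a)
    (hQ : Q.IsLabeled k a) (hgnd : Q.gnd = P.gnd) {δ lam : ℝ} (hδ : ν * a 1 ≤ δ)
    (hbal : P.ClassesBalanced a lam) : Q.ClassesBalanced a (lam + δ) := by
  intro v hv
  obtain ⟨hb, hba⟩ := hQ.2.1 v hv
  obtain ⟨u, hu, huv⟩ := hP.exists_vIdx_eq hb hba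
  have hPu := hbal u hu
  rw [hP.vClass_eq hu, huv] at hPu
  have hclose := hPQ.abs_card_vIdx_sub_le hb hba
  rw [abs_sub_comm] at hclose
  have ha : (0 : ℝ) < a 1 := by exact_mod_cast (show 0 < a 1 by omega)
  have hνn : ν * #P.gnd ≤ δ * #P.gnd / a 1 := by
    rw [le_div_iff₀ ha, mul_right_comm]
    gcongr
  rw [hQ.vClass_eq hv, add_mul, add_div, hgnd]
  rw [hgnd] at hclose
  linarith [abs_sub_le (#{w ∈ P.gnd | Q.vIdx w = Q.vIdx v} : ℝ)
    #{w ∈ P.gnd | P.vIdx w = Q.vIdx v} (#P.gnd / a 1)]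

end PerturbedPolyads

end LabFam

section Constants

lemma eventually_mul_le_rpow {p : ℝ} (hp : p < 1) (K : ℝ) :
    ∀ᶠ ν : ℝ in 𝓝[>] 0, K * ν ≤ ν ^ p := by
  have htend : Filter.Tendsto (fun ν : ℝ => K * ν ^ (1 - p)) (𝓝[>] 0) (𝓝 (K * 0)) := by
    have hcont := (Real.continuousAt_rpow_const 0 (1 - p) (Or.inr (by linarith))).tendsto
    rw [Real.zero_rpow (by linarith)] at hcont
    exact (hcont.mono_left nhdsWithin_le_nhds).const_mul K
  filter_upwards [htend.eventually_lt_const (by norm_num : K * 0 < 1), self_mem_nhdsWithin]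
    with ν hsmall hν
  calc K * ν = K * ν ^ (1 - p) * ν ^ p := by
        rw [mul_assoc, ← Real.rpow_add hν, sub_add_cancel, Real.rpow_one]
    _ ≤ 1 * ν ^ p := by gcongr; exact Real.rpow_nonneg hν.le p
    _ = ν ^ p := one_mul _

lemma exists_perturbation_bound {c : ℝ} (hc : 0 < c) {ε : ℝ} (hε : 0 < ε) (k T : ℕ) :
    ∃ ν₀ > (0 : ℝ), ∀ ν : ℝ, 0 < ν → ν ≤ ν₀ → ν ^ ((1 : ℝ) / 6) ≤ 1 ∧ ν * T ≤ ν ^ ((1 : ℝ) / 6) ∧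
      (5 * k + 1) * ν ≤ ν ^ ((1 : ℝ) / 6) * c ∧
      (5 * k + 1) * ν ≤ ν ^ ((1 : ℝ) / 6) * (ε * c) := by
  have hsmall (K : ℝ) : ∀ᶠ ν : ℝ in 𝓝[>] 0, K * ν ≤ ν ^ ((1 : ℝ) / 6) :=
    eventually_mul_le_rpow (by norm_num) K
  have hscaled {C : ℝ} (hC : 0 < C) :
      ∀ᶠ ν : ℝ in 𝓝[>] 0, (5 * k + 1) * ν ≤ ν ^ ((1 : ℝ) / 6) * C := by
    filter_upwards [hsmall ((5 * k + 1) / C)] with ν hν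
    rwa [← div_le_iff₀ hC, ← div_mul_eq_mul_div]
  have hall : ∀ᶠ ν : ℝ in 𝓝[>] 0, ν ^ ((1 : ℝ) / 6) ≤ 1 ∧ ν * T ≤ ν ^ ((1 : ℝ) / 6) ∧
      (5 * k + 1) * ν ≤ ν ^ ((1 : ℝ) / 6) * c ∧
      (5 * k + 1) * ν ≤ ν ^ ((1 : ℝ) / 6) * (ε * c) := by
    filter_upwards [Ioc_mem_nhdsGT one_pos, hsmall T, hscaled hc, hscaled (mul_pos hε hc)]
      with ν hν hT hνc hνεc
    exact ⟨Real.rpow_le_one hν.1.le hν.2 (by norm_num), mul_comm ν _ ▸ hT, hνc, hνεc⟩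
  obtain ⟨ν₀, hν₀, hsub⟩ := mem_nhdsGT_iff_exists_Ioc_subset.1 hall
  exact ⟨ν₀, hν₀, fun ν hν hνν₀ => hsub ⟨hν, hνν₀⟩⟩

end Constants

end HypReg

namespace HypReg

open Finset

/-- Persistence of equitable partitions under small perturbations of the partition and of
the hypergraph (Lemma 4.4 of the paper). -/
theorem perturbed_partition_regularity (eRI : ℕ → ℕ → ℝ) (hERI : GoodERI eRI) :
    ∀ k : ℕ, 2 ≤ k → ∀ ε : ℝ, 0 < ε →
    ∃ ν₀ : ℝ, 0 < ν₀ ∧ ∀ ν : ℝ, 0 < ν → ν ≤ ν₀ →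
    ∃ n₀ : ℕ, ∀ (V : Type) [DecidableEq V], ∀ (W : Finset V) (n : ℕ),
    W.card = n → n₀ ≤ n →
    ∀ lam : ℝ, 0 ≤ lam → lam ≤ 1/4 →
    ∀ (a : ℕ → ℕ) (d : Addr → ℝ), RegInstance eRI k (ε / 3) a d →
    ∀ Gk Hk : Finset (Finset V), IsKGraph W k Gk → IsKGraph W k Hk →
    ((sd Gk Hk).card : ℝ) ≤ ν * (n.choose k : ℝ) →
    ∀ P Q : LabFam V, P.gnd = W → Q.gnd = W →
    P.IsLabeled k a →
    P.toPartFam.IsEquitable k a (1 / (a 1 : ℝ)) ε lam →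
    P.IsDensPartition k a ε d Hk →
    Q.IsLabeled k a →
    (∀ j, 1 ≤ j → j ≤ k - 1 → ∀ (x : Addr) (b : ℕ),
      IsAddress j (j-1) a x → 1 ≤ b → b ≤ a j →
      ((sd (P.partAt j x b) (Q.partAt j x b)).card : ℝ) ≤ ν * (n.choose j : ℝ)) →
    Q.toPartFam.IsEquitable k a (1 / (a 1 : ℝ)) (ε + ν ^ ((1:ℝ)/6)) (lam + ν ^ ((1:ℝ)/6)) ∧
    Q.IsDensPartition k a (ε + ν ^ ((1:ℝ)/6)) d Gk := by
  intro k hk ε hε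
  obtain ⟨c, hc, T, n₀, hdensity⟩ := hERI.exists_clique_density hk hε
  obtain ⟨ν₀, hν₀, hsmall⟩ := exists_perturbation_bound hc hε k T
  refine ⟨ν₀, hν₀, fun ν hν hνν₀ => ⟨n₀, ?_⟩⟩
  obtain ⟨hδ1, hνT, hνc, hνεc⟩ := hsmall ν hν hνν₀
  rintro V _ _ _ rfl hn lam - hlam a d hRI Gk Hk - - hGH P Q rfl hgnd hP hPE hPD hQ hPQ
  obtain ⟨haT, hcliques⟩ := hdensity V P a d _ lam hlam hRI hP hPE hn
  have hclose {j : ℕ} (hj : 1 ≤ j) (hjk : j + 1 ≤ k) {x : Addr} (hx : IsAddress (j + 1) j a x)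
      {d' : ℝ} (hd : 0 ≤ d') (hd1 : d' ≤ 1) {A A' : Finset (Finset V)}
      (hA : (#(sd A A') : ℝ) ≤ ν * ((#P.gnd).choose (j + 1) : ℝ)) (hr : P.RegAt j ε d' x A) :
      Q.RegAt j (ε + ν ^ ((1 : ℝ) / 6)) d' x A' :=
    hr.perturb hP hQ hgnd (hPQ j hj (by omega)) hj hjk hx hA (hcliques j hj hjk x hx) hν.le hε.le
      (hERI.le_three hRI) (by positivity) hδ1 hd hd1 hνc hνεc
  refine ⟨⟨hPE.1, ?_, ?_⟩, ?_⟩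
  · exact LabFam.PartsClose.classesBalanced (hPQ 1 le_rfl (by omega)) hP hQ hgnd
      (hνT.trans' (by gcongr)) hPE.2.1
  · exact hQ.polyadReg_iff.2 fun j hj hjk x hx b hb hba =>
      hclose hj (by omega) hx (by positivity) (one_div (a (j + 1) : ℝ) ▸ Nat.cast_inv_le_one _)
        (hPQ (j + 1) (by omega) hjk x b hx hb hba)
        (hP.polyadReg_iff.1 hPE.2.2 j hj hjk x hx b hb hba)
  · obtain ⟨j, rfl⟩ := Nat.exists_eq_add_of_le' (by omega : 1 ≤ k)
    exact fun x hx => hclose (by omega) le_rfl hx (hRI.2.2.2.2 x hx).1 (hRI.2.2.2.2 x hx).2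
      (sd_comm Gk Hk ▸ hGH) (hPD x hx)

end HypReg
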